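/- Let N ⊆ M_m be a unital *-subalgebra, 1 < p ≤ ∞ with 1/p + 1/p' = 1, and ρ ∈ M_m a density. Then exp(D_p(ρ‖N)/p') = sup{Tr(xρ) : x ∈ M_m, x positive semidefinite, and ‖a x b‖_{p'} ≤ ‖a‖_{2p'} ‖b‖_{2p'} for all a, b ∈ N}. -/

import Mathlib

open scoped ENNReal Classical ComplexOrder
open Matrix

noncomputable section

namespace GJL

variable {n : Type*} [Fintype n] [DecidableEq n]

/-- `Mat n` is the matrix *-algebra with rows and columns indexed by `n`. -/
abbrev Mat (n : Type*) [Fintype n] [DecidableEq n] := Matrix n n ℂ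

/-- A density matrix: positive semidefinite with trace one. -/
def IsDensity (ρ : Mat n) : Prop := ρ.PosSemidef ∧ ρ.trace = 1

/-- The real part of the (matrix) trace. -/
def traceR (A : Mat n) : ℝ := (A.trace).re

/-- Real matrix powers via the continuous functional calculus.  For positive
semidefinite matrices and negative exponents this is the generalized inverse
power on the support, since `(0 : ℝ) ^ r = 0` for `r ≠ 0`. -/
def mpow (A : Mat n) (r : ℝ) : Mat n := cfc (fun x : ℝ => x ^ r) A

/-- Matrix logarithm on the support (`Real.log 0 = 0`). -/
def mlog (A : Mat n) : Mat n := cfc Real.log A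

/-- Schatten `p`-norm `(Tr ((x* x)^(p/2)))^(1/p)`. -/
def snorm (p : ℝ) (x : Mat n) : ℝ := (traceR (mpow (xᴴ * x) (p/2))) ^ (1/p)

/-- Operator norm `‖x‖_∞`. -/
def opNorm (x : Mat n) : ℝ := ‖(Matrix.toEuclideanCLM (𝕜 := ℂ) x : EuclideanSpace ℂ n →L[ℂ] EuclideanSpace ℂ n)‖

/-- The support projection of `ρ` is dominated by that of `σ` (for positive
semidefinite matrices: `ker σ ⊆ ker ρ`). -/
def suppLe (ρ σ : Mat n) : Prop := ∀ v, σ.mulVec v = 0 → ρ.mulVec v = 0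

/-- `e` is the support projection of `ρ`. -/
def IsSupportProj (ρ e : Mat n) : Prop :=
  e.IsHermitian ∧ e * e = e ∧ ∀ v, e.mulVec v = 0 ↔ ρ.mulVec v = 0

/-- `D_∞(ρ‖σ) = log min {λ ≥ 0 | ρ ≤ λ σ}`, `⊤` if no such `λ` exists. -/
def Dinf (ρ σ : Mat n) : EReal :=
  if ∃ c : ℝ, 0 ≤ c ∧ (c • σ - ρ).PosSemidef then
    ((Real.log (sInf {c : ℝ | 0 ≤ c ∧ (c • σ - ρ).PosSemidef}) : ℝ) : EReal)
  else ⊤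

/-- Umegaki relative entropy `D(ρ‖σ) = Tr(ρ log ρ - ρ log σ)`, `⊤` if the
support condition fails. -/
def DU (ρ σ : Mat n) : EReal :=
  if suppLe ρ σ then ((traceR (ρ * mlog ρ - ρ * mlog σ) : ℝ) : EReal) else ⊤

/-- The sandwiched matrix `σ^{(1-p)/(2p)} ρ σ^{(1-p)/(2p)}`; note that for
`p > 1` the exponent `(1-p)/(2p)` equals `-1/(2p')` with `1/p + 1/p' = 1`. -/
def sandwich (p : ℝ) (ρ σ : Mat n) : Mat n :=
  mpow σ ((1 - p)/(2*p)) * ρ * mpow σ ((1 - p)/(2*p))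

/-- The sandwiched Rényi relative entropy `D_p(ρ‖σ)` for `p ∈ [1/2, ∞]`:
for `p ∈ (1,∞)` it is `p' log ‖σ^{-1/(2p')} ρ σ^{-1/(2p')}‖_p
= (p-1)⁻¹ log Tr ((σ^{-1/(2p')} ρ σ^{-1/(2p')})^p)` when the support of `ρ` is
dominated by that of `σ` and `⊤` otherwise; for `p ∈ [1/2, 1)` it is
`(p-1)⁻¹ log Tr ((σ^{(1-p)/(2p)} ρ σ^{(1-p)/(2p)})^p)` (`⊤` when the trace
vanishes, i.e. when the honest value is `+∞`); `D_1` is the Umegaki relative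
entropy and `D_∞` the max-relative entropy. -/
def Dp (p : ℝ≥0∞) (ρ σ : Mat n) : EReal :=
  if p = ⊤ then Dinf ρ σ
  else if p = 1 then DU ρ σ
  else if 1 < p.toReal ∧ ¬ suppLe ρ σ then ⊤
  else if traceR (mpow (sandwich p.toReal ρ σ) p.toReal) = 0 then ⊤
  else (((p.toReal - 1)⁻¹ * Real.log (traceR (mpow (sandwich p.toReal ρ σ) p.toReal)) : ℝ) : EReal)

/-- `D_p(ρ‖S) = inf { D_p(ρ‖σ) | σ a density in S }`. -/
def DpSet (p : ℝ≥0∞) (ρ : Mat n) (S : Set (Mat n)) : EReal :=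
  ⨅ σ ∈ {σ ∈ S | IsDensity σ}, Dp p ρ σ

/-- `D_p(A‖S) = sup { D_p(ρ‖S) | ρ a density in A }`. -/
def DpRel (p : ℝ≥0∞) (A S : Set (Mat n)) : EReal :=
  ⨆ ρ ∈ {ρ ∈ A | IsDensity ρ}, DpSet p ρ S

open scoped Kronecker in
/-- The algebraic tensor product `N₁ ⊗ N₂ ⊆ M_{n₁} ⊗ M_{n₂} = M_{n₁ × n₂}`,
realized as the linear span of Kronecker products. -/
def tensorSpan {n₁ n₂ : Type*} [Fintype n₁] [DecidableEq n₁] [Fintype n₂] [DecidableEq n₂]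
    (N₁ : Set (Mat n₁)) (N₂ : Set (Mat n₂)) : Set (Mat (n₁ × n₂)) :=
  ↑(Submodule.span ℂ {z : Mat (n₁ × n₂) | ∃ x ∈ N₁, ∃ y ∈ N₂, z = x ⊗ₖ y})

/-- `D_{p,cb}(M‖N) = sup_k D_p(M_k ⊗ M ‖ M_k ⊗ N)`. -/
def DpCb (p : ℝ≥0∞) (N : Set (Mat n)) : EReal :=
  ⨆ k : ℕ, DpRel p Set.univ (tensorSpan (Set.univ : Set (Mat (Fin k))) N)

/-- `E` is the trace preserving conditional expectation onto `N`, i.e. the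
orthogonal projection onto `N` with respect to the Hilbert–Schmidt inner
product `⟨x,y⟩ = Tr(x* y)`. -/
def IsCondExp (N : Set (Mat n)) (E : Mat n →ₗ[ℂ] Mat n) : Prop :=
  (∀ x, E x ∈ N) ∧ (∀ x ∈ N, E x = x) ∧
    ∀ x y, y ∈ N → ((E x)ᴴ * y).trace = (xᴴ * y).trace

/-- The Pimsner–Popa index constant
`λ(M:N) = max {c ≥ 0 | c x ≤ E(x) for all x ≥ 0}`. -/
def ppIndex (E : Mat n →ₗ[ℂ] Mat n) : ℝ :=
  sSup {c : ℝ | 0 ≤ c ∧ ∀ x : Mat n, x.PosSemidef → (E x - c • x).PosSemidef}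

/-- von Neumann entropy `H(ρ) = -Tr(ρ log ρ)`. -/
def vnEntropy (ρ : Mat n) : ℝ := - traceR (ρ * mlog ρ)

/-- The amplification `id_{M_k} ⊗ Φ` acting on `M_k ⊗ M_n = M_{k × n}`,
applying `Φ` blockwise. -/
def ampFun (k : Type*) [Fintype k] [DecidableEq k] (Φ : Mat n →ₗ[ℂ] Mat n)
    (X : Mat (k × n)) : Mat (k × n) :=
  Matrix.of fun a b => Φ (Matrix.of fun s t => X (a.1, s) (b.1, t)) a.2 b.2

/-- Complete positivity: all amplifications `id_{M_k} ⊗ Φ` preserve positive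
semidefiniteness. -/
def IsCP (Φ : Mat n →ₗ[ℂ] Mat n) : Prop :=
  ∀ (k : ℕ) (X : Mat (Fin k × n)), X.PosSemidef → (ampFun (Fin k) Φ X).PosSemidef

/-- Completely positive and trace preserving. -/
def IsCPTP (Φ : Mat n →ₗ[ℂ] Mat n) : Prop :=
  IsCP Φ ∧ ∀ x : Mat n, (Φ x).trace = x.trace

theorem contSpec (f : ℝ → ℝ) (A : Mat n) : ContinuousOn f (spectrum ℝ A) :=
  (Matrix.finite_real_spectrum (A := A)).continuousOn f

/-- complex-valued functional calculus of a Hermitian matrix -/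
def fc (A : Mat n) (g : ℝ → ℂ) : Mat n :=
  if h : A.IsHermitian then
    (h.eigenvectorUnitary : Mat n) * diagonal (fun i => g (h.eigenvalues i)) *
      star (h.eigenvectorUnitary : Mat n)
  else 0

theorem fc_def {A : Mat n} (h : A.IsHermitian) (g : ℝ → ℂ) : fc A g =
    (h.eigenvectorUnitary : Mat n) * diagonal (fun i => g (h.eigenvalues i)) *
      star (h.eigenvectorUnitary : Mat n) := by
  simp [fc, h]

theorem cfc_eq_fc {A : Mat n} (h : A.IsHermitian) (f : ℝ → ℝ) :
    cfc f A = fc A (fun x => (f x : ℂ)) := by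
  rw [h.cfc_eq, fc_def h, Matrix.IsHermitian.cfc, Unitary.conjStarAlgAut_apply]
  rfl

theorem fc_mul {A : Mat n} (h : A.IsHermitian) (f g : ℝ → ℂ) :
    fc A f * fc A g = fc A (fun x => f x * g x) := by
  simp only [fc_def h]
  have : star (h.eigenvectorUnitary : Mat n) * (h.eigenvectorUnitary : Mat n) = 1 := by simp
  rw [← diagonal_mul_diagonal]
  simp only [mul_assoc]
  rw [← mul_assoc (star _) (h.eigenvectorUnitary : Mat n) _, this, one_mul]

theorem fc_congr {A : Mat n} (h : A.IsHermitian) {f g : ℝ → ℂ}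
    (hfg : ∀ i, f (h.eigenvalues i) = g (h.eigenvalues i)) : fc A f = fc A g := by
  simp only [fc_def h, hfg]

theorem fc_one {A : Mat n} (h : A.IsHermitian) : fc A (fun _ => 1) = 1 := by
  simp [fc_def h]

theorem fc_conj {A : Mat n} (h : A.IsHermitian) (f : ℝ → ℂ) :
    (fc A f)ᴴ = fc A (fun x => star (f x)) := by
  simp only [fc_def h, ← star_eq_conjTranspose]
  rw [star_mul, star_mul, star_star, star_eq_conjTranspose (diagonal _), diagonal_conjTranspose, mul_assoc]
  rfl

theorem trace_fc {A : Mat n} (h : A.IsHermitian) (f : ℝ → ℂ) :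
    (fc A f).trace = ∑ i, f (h.eigenvalues i) := by
  rw [fc_def h, trace_mul_comm, ← mul_assoc]
  simp [trace]

theorem mpow_eq_fc {A : Mat n} (h : A.IsHermitian) (r : ℝ) :
    mpow A r = fc A (fun x => ((x ^ r : ℝ) : ℂ)) := cfc_eq_fc h _

theorem traceR_cfc {A : Mat n} (h : A.IsHermitian) (f : ℝ → ℝ) :
    traceR (cfc f A) = ∑ i, f (h.eigenvalues i) := by
  rw [cfc_eq_fc h, traceR, trace_fc h]; simp

theorem traceR_mpow {A : Mat n} (h : A.IsHermitian) (r : ℝ) :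
    traceR (mpow A r) = ∑ i, (h.eigenvalues i) ^ r := traceR_cfc h _

theorem fc_posSemidef {A : Mat n} (h : A.IsHermitian) (f : ℝ → ℝ)
    (hf : ∀ i, 0 ≤ f (h.eigenvalues i)) : (fc A (fun x => (f x : ℂ))).PosSemidef := by
  rw [fc_def h]
  refine PosSemidef.mul_mul_conjTranspose_same (PosSemidef.diagonal ?_) _
  intro i; simpa using hf i

theorem fc_posDef {A : Mat n} (h : A.IsHermitian) (f : ℝ → ℝ)
    (hf : ∀ i, 0 < f (h.eigenvalues i)) : (fc A (fun x => (f x : ℂ))).PosDef := by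
  rw [fc_def h, (Matrix.IsUnit.posDef_star_right_conjugate_iff
    (U := (h.eigenvectorUnitary : Mat n)) (by exact (Unitary.toUnits h.eigenvectorUnitary).isUnit))]
  rw [posDef_diagonal_iff]
  intro i; simpa using hf i

theorem mpow_psd {A : Mat n} (h : A.PosSemidef) (r : ℝ) : (mpow A r).PosSemidef := by
  rw [mpow_eq_fc h.1]
  exact fc_posSemidef h.1 _ fun i => Real.rpow_nonneg (h.eigenvalues_nonneg i) _

theorem mpow_pd {A : Mat n} (h : A.PosDef) (r : ℝ) : (mpow A r).PosDef := by
  rw [mpow_eq_fc h.1]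
  exact fc_posDef h.1 _ fun i => Real.rpow_pos_of_pos (h.eigenvalues_pos i) _

theorem mpow_herm (A : Mat n) (r : ℝ) : (mpow A r)ᴴ = mpow A r := by
  have : IsSelfAdjoint (mpow A r) := cfc_predicate _ _
  exact this

theorem mpow_add {A : Mat n} (h : A.PosSemidef) {a b : ℝ} (hab : a + b ≠ 0) :
    mpow A a * mpow A b = mpow A (a + b) := by
  simp only [mpow_eq_fc h.1, fc_mul h.1]
  refine fc_congr h.1 fun i => ?_
  rw [Real.rpow_add' (h.eigenvalues_nonneg i) hab]; simp

theorem mpow_add_pd {A : Mat n} (h : A.PosDef) (a b : ℝ) :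
    mpow A a * mpow A b = mpow A (a + b) := by
  simp only [mpow_eq_fc h.1, fc_mul h.1]
  refine fc_congr h.1 fun i => ?_
  rw [Real.rpow_add (h.eigenvalues_pos i)]; simp

theorem mpow_one {A : Mat n} (h : A.IsHermitian) : mpow A 1 = A := by
  have : IsSelfAdjoint A := h
  simp only [mpow, Real.rpow_one]
  exact cfc_id' ℝ A

theorem mpow_zero {A : Mat n} (h : A.IsHermitian) : mpow A 0 = 1 := by
  rw [mpow_eq_fc h, ← fc_one h]; simp

theorem cfc_comp_mat {A : Mat n} (h : A.IsHermitian) (f g : ℝ → ℝ) :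
    cfc g (cfc f A) = cfc (fun x => g (f x)) A := by
  have h' : IsSelfAdjoint A := h
  have := cfc_comp g f A h' ((Matrix.finite_real_spectrum (A := A)).image f |>.continuousOn g)
    (contSpec f A)
  rw [← this]; rfl

theorem cfc_congr_mat {A : Mat n} (h : A.IsHermitian) {f g : ℝ → ℝ}
    (hfg : ∀ i, f (h.eigenvalues i) = g (h.eigenvalues i)) : cfc f A = cfc g A := by
  rw [cfc_eq_fc h, cfc_eq_fc h]
  exact fc_congr h fun i => by rw [hfg]

theorem mpow_mpow {A : Mat n} (h : A.PosSemidef) (a b : ℝ) :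
    mpow (mpow A a) b = mpow A (a * b) := by
  unfold mpow
  rw [cfc_comp_mat h.1]
  exact cfc_congr_mat h.1 fun i => by rw [Real.rpow_mul (h.eigenvalues_nonneg i)]

theorem mpow_smul {A : Mat n} (h : A.PosSemidef) {c : ℝ} (hc : 0 ≤ c) (s : ℝ) :
    mpow (c • A) s = c ^ s • mpow A s := by
  have h' : IsSelfAdjoint A := h.1
  have e : c • A = cfc (fun x => c * x) A := by
    rw [cfc_const_mul _ _ _ (contSpec _ _), cfc_id' ℝ A]
  unfold mpow
  rw [e, cfc_comp_mat h.1, ← cfc_smul _ _ _ (contSpec _ _)]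
  refine cfc_congr_mat h.1 fun i => ?_
  rw [Real.mul_rpow hc (h.eigenvalues_nonneg i)]; rfl

theorem traceR_smul (c : ℝ) (A : Mat n) : traceR (c • A) = c * traceR A := by
  simp [traceR, trace_smul]

theorem traceR_add (A B : Mat n) : traceR (A + B) = traceR A + traceR B := by
  simp [traceR]

theorem traceR_sub (A B : Mat n) : traceR (A - B) = traceR A - traceR B := by
  simp [traceR]

theorem traceR_comm (A B : Mat n) : traceR (A * B) = traceR (B * A) := by
  simp only [traceR]; rw [trace_mul_comm]

theorem psd_traceR_nonneg {A : Mat n} (h : A.PosSemidef) : 0 ≤ traceR A := by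
  have := h.trace_nonneg
  exact (Complex.nonneg_iff.1 this).1

theorem psd_smul {A : Mat n} (h : A.PosSemidef) {c : ℝ} (hc : 0 ≤ c) : (c • A).PosSemidef :=
  h.smul hc

theorem pd_smul {A : Mat n} (h : A.PosDef) {c : ℝ} (hc : 0 < c) : (c • A).PosDef :=
  h.smul hc

theorem psd_mul_traceR_nonneg {A B : Mat n} (hA : A.PosSemidef) (hB : B.PosSemidef) :
    0 ≤ traceR (A * B) := by
  have e : mpow A (1/2) * mpow A (1/2) = A := by
    rw [mpow_add hA (by norm_num)]; norm_num; exact mpow_one hA.1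
  have : traceR (A * B) = traceR (mpow A (1/2) * B * (mpow A (1/2))ᴴ) := by
    rw [mpow_herm, traceR_comm _ (mpow A (1/2)), ← mul_assoc, e]
  rw [this]
  exact psd_traceR_nonneg (hB.mul_mul_conjTranspose_same _)

theorem traceR_mul_le {A B C : Mat n} (hBA : (B - A).PosSemidef) (hC : C.PosSemidef) :
    traceR (A * C) ≤ traceR (B * C) := by
  have := psd_mul_traceR_nonneg hBA hC
  rw [sub_mul, traceR_sub] at this; linarith

theorem mpow_mem {N : StarSubalgebra ℂ (Mat n)} {A : Mat n} (hA : A ∈ N) (r : ℝ) :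
    mpow A r ∈ N := by
  have hc : IsClosed (N : Set (Mat n)) :=
    (Subalgebra.toSubmodule N.toSubalgebra).closed_of_finiteDimensional
  exact cfc_mem (𝕜' := ℂ) (hs := hc) _ hA

theorem traceR_mpow_comm (M : Mat n) (s : ℝ) :
    traceR (mpow (Mᴴ * M) s) = traceR (mpow (M * Mᴴ) s) := by
  have h1 := (posSemidef_conjTranspose_mul_self M).1
  have h2 := (posSemidef_self_mul_conjTranspose M).1
  rw [traceR_mpow h1, traceR_mpow h2]
  have : h1.eigenvalues = h2.eigenvalues := by
    rw [IsHermitian.eigenvalues_eq_eigenvalues_iff, charpoly_mul_comm]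
  rw [this]

theorem traceR_mpow_nonneg {A : Mat n} (h : A.PosSemidef) (r : ℝ) : 0 ≤ traceR (mpow A r) :=
  psd_traceR_nonneg (mpow_psd h r)

theorem traceR_mpow_pos {A : Mat n} (h : A.PosSemidef) (h0 : A ≠ 0) (r : ℝ) :
    0 < traceR (mpow A r) := by
  rw [traceR_mpow h.1]
  have : ∃ i, 0 < h.1.eigenvalues i := by
    by_contra! hh
    apply h0
    rw [← h.1.eigenvalues_eq_zero_iff]
    funext i; exact le_antisymm (hh i) (h.eigenvalues_nonneg i)
  obtain ⟨i, hi⟩ := this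
  exact Finset.sum_pos' (fun i _ => Real.rpow_nonneg (h.eigenvalues_nonneg i) _)
    ⟨i, Finset.mem_univ i, Real.rpow_pos_of_pos hi _⟩

theorem traceR_mul_eq {A B : Mat n} (hA : A.IsHermitian) (hB : B.IsHermitian) :
    ∃ w : n → n → ℝ, (∀ i j, 0 ≤ w i j) ∧ (∀ i, ∑ j, w i j = 1) ∧ (∀ j, ∑ i, w i j = 1) ∧
      traceR (A * B) = ∑ i, ∑ j, hA.eigenvalues i * hB.eigenvalues j * w i j := by
  set U : Mat n := (hA.eigenvectorUnitary : Mat n)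
  set V : Mat n := (hB.eigenvectorUnitary : Mat n)
  set W : Mat n := star U * V with hW
  have hU : star U * U = 1 := by simp [U]
  have hU' : U * star U = 1 := by simp [U]
  have hV : star V * V = 1 := by simp [V]
  have hV' : V * star V = 1 := by simp [V]
  have h1 : W * Wᴴ = 1 := by
    rw [← star_eq_conjTranspose, hW, star_mul, star_star, mul_assoc, ← mul_assoc V, hV', one_mul, hU]
  have h2 : Wᴴ * W = 1 := by
    rw [← star_eq_conjTranspose, hW, star_mul, star_star, mul_assoc, ← mul_assoc U, hU', one_mul, hV]
  have hn : ∀ i j, ((‖W i j‖ ^ 2 : ℝ) : ℂ) = W i j * star (W i j) := by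
    intro i j
    rw [← Complex.normSq_eq_norm_sq, ← Complex.mul_conj]; rfl
  refine ⟨fun i j => ‖W i j‖ ^ 2, fun i j => by positivity, fun i => ?_, fun j => ?_, ?_⟩
  · have := congrFun (congrFun h1 i) i
    simp only [mul_apply, conjTranspose_apply, one_apply_eq, ← hn] at this
    exact_mod_cast this
  · have := congrFun (congrFun h2 j) j
    simp only [mul_apply, conjTranspose_apply, one_apply_eq] at this
    simp only [mul_comm (star _), ← hn] at this
    exact_mod_cast this
  · have eA : A = U * diagonal (fun i => (hA.eigenvalues i : ℂ)) * star U := by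
      conv_lhs => rw [← mpow_one hA, mpow_eq_fc hA, fc_def hA]
      simp [U]
    have eB : B = V * diagonal (fun i => (hB.eigenvalues i : ℂ)) * star V := by
      conv_lhs => rw [← mpow_one hB, mpow_eq_fc hB, fc_def hB]
      simp [V]
    have : (A * B).trace = (diagonal (fun i => (hA.eigenvalues i : ℂ)) * W *
        (diagonal (fun i => (hB.eigenvalues i : ℂ)) * Wᴴ)).trace := by
      conv_lhs => rw [eA, eB]
      rw [← star_eq_conjTranspose, hW, star_mul, star_star]
      simp only [mul_assoc]
      rw [trace_mul_comm]
      simp only [mul_assoc]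
    rw [traceR, this, trace]
    simp only [diag_apply]
    have h3 : ∀ i, (diagonal (fun i => (hA.eigenvalues i : ℂ)) * W *
        (diagonal (fun i => (hB.eigenvalues i : ℂ)) * Wᴴ)) i i =
        ∑ j, ↑(hA.eigenvalues i) * W i j * (↑(hB.eigenvalues j) * star (W i j)) := by
      intro i
      rw [mul_apply]
      refine Finset.sum_congr rfl fun j _ => ?_
      rw [diagonal_mul, diagonal_mul, conjTranspose_apply]
    have : ∀ i j, ↑(hA.eigenvalues i) * W i j * (↑(hB.eigenvalues j) * star (W i j)) =
      ((hA.eigenvalues i * hB.eigenvalues j * ‖W i j‖ ^ 2 : ℝ) : ℂ) := by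
      intro i j
      rw [Complex.ofReal_mul, hn]; push_cast; ring
    simp only [h3, this]
    norm_cast

theorem holder_psd {A B : Mat n} (hA : A.PosSemidef) (hB : B.PosSemidef) {r p : ℝ}
    (hrp : r.HolderConjugate p) :
    traceR (A * B) ≤ (traceR (mpow A r)) ^ (1/r) * (traceR (mpow B p)) ^ (1/p) := by
  obtain ⟨w, w0, w1, w2, e⟩ := traceR_mul_eq hA.1 hB.1
  have hr := hrp.pos
  have hp := hrp.symm.pos
  rw [e, traceR_mpow hA.1, traceR_mpow hB.1]
  set a := hA.1.eigenvalues
  set b := hB.1.eigenvalues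
  have a0 : ∀ i, 0 ≤ a i := hA.eigenvalues_nonneg
  have b0 : ∀ i, 0 ≤ b i := hB.eigenvalues_nonneg
  have := Real.inner_le_Lp_mul_Lq_of_nonneg (Finset.univ : Finset (n × n))
    (f := fun x => a x.1 * w x.1 x.2 ^ (1/r)) (g := fun x => b x.2 * w x.1 x.2 ^ (1/p)) hrp
    (fun x _ => mul_nonneg (a0 _) (Real.rpow_nonneg (w0 _ _) _))
    (fun x _ => mul_nonneg (b0 _) (Real.rpow_nonneg (w0 _ _) _))
  rw [Fintype.sum_prod_type, Fintype.sum_prod_type, Fintype.sum_prod_type_right] at this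
  have e1 : ∀ i j, a i * w i j ^ (1/r) * (b j * w i j ^ (1/p)) = a i * b j * w i j := by
    intro i j
    have : w i j ^ (1/r) * w i j ^ (1/p) = w i j := by
      rw [← Real.rpow_add' (w0 i j)]
      · rw [one_div, one_div, hrp.inv_add_inv_eq_one, Real.rpow_one]
      · rw [one_div, one_div, hrp.inv_add_inv_eq_one]; norm_num
    calc _ = a i * b j * (w i j ^ (1/r) * w i j ^ (1/p)) := by ring
      _ = _ := by rw [this]
  have e2 : ∀ i j, (a i * w i j ^ (1/r)) ^ r = a i ^ r * w i j := by
    intro i j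
    rw [Real.mul_rpow (a0 i) (Real.rpow_nonneg (w0 _ _) _), ← Real.rpow_mul (w0 i j),
      one_div, inv_mul_cancel₀ hr.ne', Real.rpow_one]
  have e3 : ∀ i j, (b j * w i j ^ (1/p)) ^ p = b j ^ p * w i j := by
    intro i j
    rw [Real.mul_rpow (b0 j) (Real.rpow_nonneg (w0 _ _) _), ← Real.rpow_mul (w0 i j),
      one_div, inv_mul_cancel₀ hp.ne', Real.rpow_one]
  simp only [e1, e2, e3, ← Finset.mul_sum, w1, w2, mul_one] at this
  simpa only [Finset.mul_sum, mul_assoc] using this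

/-- If `T ≤ c T^{1/p}` then `T^{1/r} ≤ c`. -/
theorem le_of_self_bound {T c r p : ℝ} (hrp : r.HolderConjugate p) (hT : 0 ≤ T) (hc : 0 ≤ c)
    (h : T ≤ c * T ^ (1/p)) : T ^ (1/r) ≤ c := by
  rcases hT.eq_or_lt with h0 | h0
  · rw [← h0, Real.zero_rpow (by have := hrp.pos; positivity)]; exact hc
  · have e : T ^ (1/r) * T ^ (1/p) = T := by
      rw [← Real.rpow_add h0, one_div, one_div, hrp.inv_add_inv_eq_one, Real.rpow_one]
    have hpos : 0 < T ^ (1/p) := Real.rpow_pos_of_pos h0 _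
    exact le_of_mul_le_mul_right (by rw [e]; exact h) hpos

theorem trace_mpow_mono {A B : Mat n} (hA : A.PosSemidef) (hAB : (B - A).PosSemidef) {p : ℝ}
    (hp : 1 ≤ p) : traceR (mpow A p) ≤ traceR (mpow B p) := by
  have hB : B.PosSemidef := by simpa using hA.add hAB
  rcases hp.eq_or_lt with h | h
  · rw [← h, mpow_one hA.1, mpow_one hB.1]
    have := psd_traceR_nonneg hAB
    rw [traceR_sub] at this; linarith
  · obtain ⟨r, hr⟩ : ∃ r, p.HolderConjugate r := ⟨_, Real.HolderConjugate.conjExponent h⟩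
    have hp0 := hr.pos
    have e1 : traceR (mpow A p) = traceR (A * mpow A (p-1)) := by
      conv_rhs => rw [← mpow_one hA.1, mpow_mpow hA, one_mul, mpow_add hA (by linarith)]
      congr 2; ring
    have e2 := traceR_mul_le hAB (mpow_psd hA (p-1))
    have e3 := holder_psd hB (mpow_psd hA (p-1)) hr
    have e4 : mpow (mpow A (p-1)) r = mpow A p := by
      rw [mpow_mpow hA, hr.sub_one_mul_conj]
    rw [e4] at e3
    have := le_of_self_bound hr (traceR_mpow_nonneg hA p)
      (Real.rpow_nonneg (traceR_mpow_nonneg hB p) _) (e1.le.trans (e2.trans e3))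
    exact (Real.rpow_le_rpow_iff (traceR_mpow_nonneg hA p) (traceR_mpow_nonneg hB p)
      (by positivity)).1 this

section Interp
open scoped Matrix.Norms.L2Operator

theorem row_col_contraction {H : Type*} [NormedAddCommGroup H] [InnerProductSpace ℂ H]
    [CompleteSpace H] (c₁ c₂ d₁ d₂ Y₁ Y₂ : H →L[ℂ] H)
    (hc : c₁ * star c₁ + c₂ * star c₂ = 1) (hd : star d₁ * d₁ + star d₂ * d₂ = 1)
    (h₁ : ‖Y₁‖ ≤ 1) (h₂ : ‖Y₂‖ ≤ 1) : ‖c₁ * Y₁ * d₁ + c₂ * Y₂ * d₂‖ ≤ 1 := by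
  have hsq : ∀ (a b : H →L[ℂ] H), star a * a + star b * b = 1 → ∀ v, ‖a v‖ ^ 2 + ‖b v‖ ^ 2 = ‖v‖ ^ 2 := by
    intro a b hab v
    have h1 : inner ℂ ((star a * a + star b * b) v) v = inner ℂ v v := by rw [hab]; rfl
    have h2 : ∀ x : H →L[ℂ] H, inner ℂ ((star x * x) v) v = inner ℂ (x v) (x v) := by
      intro x
      rw [ContinuousLinearMap.star_eq_adjoint, ContinuousLinearMap.mul_apply,
        ContinuousLinearMap.adjoint_inner_left]
    rw [ContinuousLinearMap.add_apply, inner_add_left, h2, h2] at h1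
    simp only [inner_self_eq_norm_sq_to_K] at h1
    exact_mod_cast h1
  refine ContinuousLinearMap.opNorm_le_bound _ zero_le_one fun v => ?_
  set w := (c₁ * Y₁ * d₁ + c₂ * Y₂ * d₂) v with hw
  have e1 := hsq (star c₁) (star c₂) (by simpa using hc) w
  have e2 := hsq d₁ d₂ hd v
  have e3 : ∀ (c Y d : H →L[ℂ] H), ‖Y‖ ≤ 1 → ‖inner ℂ w ((c * Y * d) v)‖ ≤ ‖star c w‖ * ‖d v‖ := by
    intro c Y d hY
    have : inner ℂ w ((c * Y * d) v) = inner ℂ (star c w) (Y (d v)) := by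
      rw [ContinuousLinearMap.star_eq_adjoint, ContinuousLinearMap.adjoint_inner_left]; rfl
    rw [this]
    refine (norm_inner_le_norm _ _).trans ?_
    gcongr
    calc ‖Y (d v)‖ ≤ ‖Y‖ * ‖d v‖ := Y.le_opNorm _
      _ ≤ 1 * ‖d v‖ := by gcongr
      _ = _ := one_mul _
  have e4 : ‖w‖ ^ 2 ≤ ‖star c₁ w‖ * ‖d₁ v‖ + ‖star c₂ w‖ * ‖d₂ v‖ := by
    have : ‖inner ℂ w w‖ = ‖w‖ ^ 2 := by
      rw [inner_self_eq_norm_sq_to_K]; simp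
    rw [← this]
    have hsum : inner ℂ w w = inner ℂ w ((c₁ * Y₁ * d₁) v) + inner ℂ w ((c₂ * Y₂ * d₂) v) := by
      rw [← inner_add_right]; rfl
    rw [hsum]
    exact (norm_add_le _ _).trans (add_le_add (e3 _ _ _ h₁) (e3 _ _ _ h₂))
  rw [one_mul]
  by_contra! hlt
  have hv := norm_nonneg v
  nlinarith [sq_nonneg (‖star c₁ w‖ - ‖d₁ v‖), sq_nonneg (‖star c₂ w‖ - ‖d₂ v‖)]

theorem row_col_contraction_mat (c₁ c₂ d₁ d₂ Y₁ Y₂ : Mat n)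
    (hc : c₁ * c₁ᴴ + c₂ * c₂ᴴ = 1) (hd : d₁ᴴ * d₁ + d₂ᴴ * d₂ = 1)
    (h₁ : ‖Y₁‖ ≤ 1) (h₂ : ‖Y₂‖ ≤ 1) : ‖c₁ * Y₁ * d₁ + c₂ * Y₂ * d₂‖ ≤ 1 := by
  have := row_col_contraction (toEuclideanCLM (n := n) (𝕜 := ℂ) c₁) (toEuclideanCLM (n := n) (𝕜 := ℂ) c₂)
    (toEuclideanCLM (n := n) (𝕜 := ℂ) d₁) (toEuclideanCLM (n := n) (𝕜 := ℂ) d₂)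
    (toEuclideanCLM (n := n) (𝕜 := ℂ) Y₁) (toEuclideanCLM (n := n) (𝕜 := ℂ) Y₂)
    (by rw [← map_star, ← map_star, ← map_mul, ← map_mul, ← map_add, star_eq_conjTranspose,
          star_eq_conjTranspose, hc, map_one])
    (by rw [← map_star, ← map_star, ← map_mul, ← map_mul, ← map_add, star_eq_conjTranspose,
          star_eq_conjTranspose, hd, map_one])
    h₁ h₂
  rw [← map_mul, ← map_mul, ← map_mul, ← map_mul, ← map_add] at this
  exact this

theorem norm_fc {A : Mat n} (h : A.IsHermitian) (g : ℝ → ℂ) :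
    ‖fc A g‖ = ‖fun i => g (h.eigenvalues i)‖ := by
  rw [fc_def h, ← Unitary.coe_star, CStarRing.norm_mul_coe_unitary, CStarRing.norm_coe_unitary_mul,
    l2_opNorm_diagonal]

theorem norm_entry_le (M : Mat n) (i : n) : ‖M i i‖ ≤ ‖M‖ := by
  have h := l2_opNorm_mulVec M (EuclideanSpace.single i (1:ℂ))
  have h2 := PiLp.norm_apply_le (WithLp.toLp 2 (M *ᵥ (EuclideanSpace.single i (1:ℂ)).ofLp)) i
  have h3 : (WithLp.toLp 2 (M *ᵥ (EuclideanSpace.single i (1:ℂ)).ofLp)) i = M i i := by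
    simp
  rw [h3] at h2
  refine h2.trans (h.trans ?_)
  simp

theorem norm_trace_mul_fc_le {A : Mat n} (h : A.IsHermitian) (C : Mat n) (g : ℝ → ℂ) :
    ‖(C * fc A g).trace‖ ≤ ‖C‖ * ∑ i, ‖g (h.eigenvalues i)‖ := by
  have e : (C * fc A g).trace = ∑ i, (star (h.eigenvectorUnitary : Mat n) * C *
      (h.eigenvectorUnitary : Mat n)) i i * g (h.eigenvalues i) := by
    rw [fc_def h, ← mul_assoc, trace_mul_comm, ← mul_assoc, ← mul_assoc, trace]
    refine Finset.sum_congr rfl fun i _ => ?_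
    rw [diag_apply, mul_diagonal]
  rw [e, Finset.mul_sum]
  refine (norm_sum_le _ _).trans (Finset.sum_le_sum fun i _ => ?_)
  rw [norm_mul]
  gcongr
  refine (norm_entry_le _ _).trans_eq ?_
  rw [CStarRing.norm_mul_coe_unitary, ← Unitary.coe_star, CStarRing.norm_coe_unitary_mul]

/-- generalized complex power -/
def gpow (z : ℂ) (x : ℝ) : ℂ := if x = 0 then 0 else Complex.exp (z * (Real.log x : ℂ))

theorem gpow_mul (z w : ℂ) (x : ℝ) : gpow z x * gpow w x = gpow (z + w) x := by
  unfold gpow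
  split_ifs
  · simp
  · rw [← Complex.exp_add]; ring_nf

theorem gpow_star (z : ℂ) (x : ℝ) : star (gpow z x) = gpow (star z) x := by
  unfold gpow
  split_ifs
  · simp
  · have := (Complex.exp_conj (z * (Real.log x : ℂ))).symm
    rw [map_mul, Complex.conj_ofReal] at this
    exact this

theorem gpow_real {s x : ℝ} (hs : s ≠ 0) (hx : 0 ≤ x) : gpow (s : ℂ) x = ((x ^ s : ℝ) : ℂ) := by
  unfold gpow
  split_ifs with h
  · rw [h, Real.zero_rpow hs]; simp
  · rw [Real.rpow_def_of_pos (lt_of_le_of_ne hx (Ne.symm h))]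
    push_cast
    ring_nf

theorem norm_gpow_le (z : ℂ) {x : ℝ} (hx : 0 ≤ x) : ‖gpow z x‖ ≤ x ^ z.re := by
  unfold gpow
  split_ifs with h
  · simp only [norm_zero]; exact Real.rpow_nonneg hx _
  · rw [Real.rpow_def_of_pos (lt_of_le_of_ne hx (Ne.symm h)), Complex.norm_exp]
    simp [mul_comm]

/-- complex powers of matrices -/
def cp (A : Mat n) (z : ℂ) : Mat n := fc A (gpow z)

theorem cp_mul {A : Mat n} (h : A.IsHermitian) (z w : ℂ) : cp A z * cp A w = cp A (z + w) := by
  simp only [cp, fc_mul h, gpow_mul]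

theorem cp_star {A : Mat n} (h : A.IsHermitian) (z : ℂ) : (cp A z)ᴴ = cp A (star z) := by
  simp only [cp, fc_conj h, gpow_star]

theorem cp_real {A : Mat n} (h : A.PosSemidef) {s : ℝ} (hs : s ≠ 0) :
    cp A (s : ℂ) = mpow A s := by
  rw [cp, mpow_eq_fc h.1]
  exact fc_congr h.1 fun i => gpow_real hs (h.eigenvalues_nonneg i)

theorem cp_zero {A : Mat n} (h : A.PosDef) : cp A 0 = 1 := by
  rw [cp, ← fc_one h.1]
  refine fc_congr h.1 fun i => ?_
  simp [gpow, (h.eigenvalues_pos i).ne']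

theorem norm_cp_le_one {A : Mat n} (h : A.PosSemidef) {z : ℂ} (hz : z.re = 0) : ‖cp A z‖ ≤ 1 := by
  rw [cp, norm_fc h.1, pi_norm_le_iff_of_nonneg zero_le_one]
  intro i
  refine (norm_gpow_le z (h.eigenvalues_nonneg i)).trans_eq ?_
  rw [hz, Real.rpow_zero]

theorem norm_trace_mul_cp_le {A : Mat n} (h : A.PosSemidef) (C : Mat n) (z : ℂ) (hC : ‖C‖ ≤ 1) :
    ‖(C * cp A z).trace‖ ≤ traceR (mpow A z.re) := by
  refine (norm_trace_mul_fc_le h.1 C _).trans ?_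
  rw [traceR_mpow h.1]
  have : ∑ i, ‖gpow z (h.1.eigenvalues i)‖ ≤ ∑ i, h.1.eigenvalues i ^ z.re :=
    Finset.sum_le_sum fun i _ => norm_gpow_le z (h.eigenvalues_nonneg i)
  calc _ ≤ 1 * ∑ i, ‖gpow z (h.1.eigenvalues i)‖ := by gcongr
    _ ≤ _ := by rw [one_mul]; exact this

theorem cp_bdd {A : Mat n} (h : A.IsHermitian) (a b : ℝ) : ∃ C : ℝ, 0 ≤ C ∧ ∀ z : ℂ,
    0 ≤ z.re → z.re ≤ 1 → ‖cp A (a * z + b)‖ ≤ C := by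
  refine ⟨∑ i, Real.exp ((|a| + |b|) * |Real.log (h.eigenvalues i)|), by positivity, ?_⟩
  intro z h0 h1
  rw [cp, norm_fc h, pi_norm_le_iff_of_nonneg (by positivity)]
  intro i
  refine le_trans ?_ (Finset.single_le_sum (f := fun i => Real.exp ((|a| + |b|) *
    |Real.log (h.eigenvalues i)|)) (fun i _ => (Real.exp_pos _).le) (Finset.mem_univ i))
  unfold gpow
  split_ifs
  · simp only [norm_zero]; positivity
  · rw [Complex.norm_exp, Real.exp_le_exp]
    have e : ((a * z + b) * (Real.log (h.eigenvalues i) : ℂ)).re =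
      (a * z.re + b) * Real.log (h.eigenvalues i) := by simp
    rw [e]
    refine (le_abs_self _).trans ?_
    rw [abs_mul]
    gcongr
    refine (abs_add_le _ _).trans ?_
    refine add_le_add ?_ le_rfl
    rw [abs_mul, abs_of_nonneg h0]
    nlinarith [abs_nonneg a]

theorem cp_diff {A : Mat n} (h : A.IsHermitian) (a b : ℝ) :
    Differentiable ℂ (fun z : ℂ => cp A (a * z + b)) := by
  have e : (fun z : ℂ => cp A (a * z + b)) = fun z => (h.eigenvectorUnitary : Mat n) *
      (∑ i, gpow (a * z + b) (h.eigenvalues i) • Matrix.single i i (1:ℂ)) *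
      star (h.eigenvectorUnitary : Mat n) := by
    funext z
    rw [cp, fc_def h]
    congr 2
    ext i j
    simp [Matrix.sum_apply, Matrix.single_apply, diagonal_apply]
    by_cases hij : i = j
    · subst hij; simp
    · simp only [hij, if_false]
      symm
      apply Finset.sum_eq_zero
      intro c _
      rw [if_neg]
      rintro ⟨rfl, rfl⟩
      exact hij rfl
  rw [e]
  have hg : ∀ x : ℝ, Differentiable ℂ (fun z : ℂ => gpow (a * z + b) x) := by
    intro x
    unfold gpow
    split_ifs
    · exact differentiable_const _
    · fun_prop
  have : Differentiable ℂ (fun z : ℂ =>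
      (∑ i, gpow (a * z + b) (h.eigenvalues i) • Matrix.single i i (1:ℂ) : Mat n)) := by
    refine Differentiable.fun_sum fun i _ => ?_
    exact (hg _).smul_const _
  exact ((differentiable_const _).mul this).mul (differentiable_const _)

/-- good functions on the strip -/
def Good (F : ℂ → Mat n) : Prop := Differentiable ℂ F ∧ ∃ C : ℝ, 0 ≤ C ∧ ∀ z : ℂ,
    0 ≤ z.re → z.re ≤ 1 → ‖F z‖ ≤ C

theorem Good.cp {A : Mat n} (h : A.IsHermitian) (a b : ℝ) :
    Good (fun z : ℂ => cp A (a * z + b)) := ⟨cp_diff h a b, cp_bdd h a b⟩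

theorem Good.mul {F G : ℂ → Mat n} (hF : Good F) (hG : Good G) : Good (fun z => F z * G z) := by
  obtain ⟨dF, C, C0, hC⟩ := hF
  obtain ⟨dG, D, D0, hD⟩ := hG
  refine ⟨dF.mul dG, C * D, by positivity, fun z h0 h1 => (norm_mul_le _ _).trans ?_⟩
  exact mul_le_mul (hC z h0 h1) (hD z h0 h1) (norm_nonneg _) C0

theorem Good.add {F G : ℂ → Mat n} (hF : Good F) (hG : Good G) : Good (fun z => F z + G z) := by
  obtain ⟨dF, C, C0, hC⟩ := hF
  obtain ⟨dG, D, D0, hD⟩ := hG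
  exact ⟨dF.add dG, C + D, by positivity, fun z h0 h1 => (norm_add_le _ _).trans
    (add_le_add (hC z h0 h1) (hD z h0 h1))⟩

theorem Good.trace_diff {F : ℂ → Mat n} (hF : Good F) : Differentiable ℂ (fun z => (F z).trace) :=
  (LinearMap.toContinuousLinearMap (traceLinearMap n ℂ ℂ)).differentiable.comp hF.1

theorem Good.trace_bdd {F : ℂ → Mat n} (hF : Good F) :
    BddAbove ((norm ∘ fun z => (F z).trace) ''
      Complex.HadamardThreeLines.verticalClosedStrip 0 1) := by
  obtain ⟨dF, C, C0, hC⟩ := hF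
  refine ⟨Fintype.card n * C, ?_⟩
  rintro _ ⟨z, hz, rfl⟩
  have hz' : z.re ∈ Set.Icc (0:ℝ) 1 := hz
  have : ‖(F z).trace‖ ≤ ∑ _i : n, C :=
    (norm_sum_le _ _).trans (Finset.sum_le_sum fun i _ =>
      (norm_entry_le _ _).trans (hC z hz'.1 hz'.2))
  simpa using this

end Interp

section Key
open scoped Matrix.Norms.L2Operator

theorem norm_mul_le_one {A B : Mat n} (hA : ‖A‖ ≤ 1) (hB : ‖B‖ ≤ 1) : ‖A * B‖ ≤ 1 :=
  (norm_mul_le _ _).trans (mul_le_one₀ hA (norm_nonneg _) hB)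

/-- the analytic family used in the interpolation argument -/
def gfam (σ τ y : Mat n) (p : ℝ) (z : ℂ) : Mat n :=
  (cp σ ((-(1/2) : ℝ) * z + (0:ℝ)) * cp τ ((1/2 : ℝ) * z + (0:ℝ))) * cp y ((-p : ℝ) * z + (p:ℝ)) *
    (cp τ ((1/2 : ℝ) * z + (0:ℝ)) * cp σ ((-(1/2) : ℝ) * z + (0:ℝ)))

theorem gfam_good {σ τ y : Mat n} (hσ : σ.IsHermitian) (hτ : τ.IsHermitian) (hy : y.IsHermitian)
    (p : ℝ) : Good (gfam σ τ y p) :=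
  (((Good.cp hσ _ _).mul (Good.cp hτ _ _)).mul (Good.cp hy _ _)).mul
    ((Good.cp hτ _ _).mul (Good.cp hσ _ _))

theorem gfam_left {σ τ y Y : Mat n} (hσ : σ.PosSemidef) (hτ : τ.PosSemidef) (hy : y.PosSemidef)
    {p : ℝ} {z : ℂ} (hz : z.re = 0) (hY : ‖Y‖ ≤ 1) :
    ‖(Y * gfam σ τ y p z).trace‖ ≤ traceR (mpow y p) := by
  have e : (Y * gfam σ τ y p z).trace =
      (((cp τ ((1/2 : ℝ) * z + (0:ℝ)) * cp σ ((-(1/2) : ℝ) * z + (0:ℝ))) * Y *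
      (cp σ ((-(1/2) : ℝ) * z + (0:ℝ)) * cp τ ((1/2 : ℝ) * z + (0:ℝ)))) *
        cp y ((-p : ℝ) * z + (p:ℝ))).trace := by
    unfold gfam
    rw [← mul_assoc, trace_mul_comm]
    simp only [mul_assoc]
  rw [e]
  have h1 : ‖cp τ ((1/2 : ℝ) * z + (0:ℝ))‖ ≤ 1 := norm_cp_le_one hτ (by simp [hz])
  have h2 : ‖cp σ ((-(1/2) : ℝ) * z + (0:ℝ))‖ ≤ 1 := norm_cp_le_one hσ (by simp [hz])
  refine (norm_trace_mul_cp_le hy _ _ (norm_mul_le_one (norm_mul_le_one (norm_mul_le_one h1 h2) hY)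
    (norm_mul_le_one h2 h1))).trans_eq ?_
  simp [hz]

theorem gfam_right {σ₁ σ₂ y₁ y₂ : Mat n} (h₁ : σ₁.PosDef) (h₂ : σ₂.PosDef) (hy₁ : y₁.PosSemidef)
    (hy₂ : y₂.PosSemidef) {p : ℝ} {z : ℂ} (hz : z.re = 1) :
    ‖gfam (σ₁ + σ₂) σ₁ y₁ p z + gfam (σ₁ + σ₂) σ₂ y₂ p z‖ ≤ 1 := by
  have hσ := h₁.add h₂
  have hre : star z = 2 - z := by
    apply Complex.ext <;> simp [hz]; norm_num
  have hs : ∀ a : ℝ, star (a * z + (0:ℝ)) = 2 * a - a * z := by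
    intro a
    rw [star_add, star_mul', hre]
    simp
    ring
  have one : ∀ {τ : Mat n}, τ.PosDef → cp τ 1 = τ := by
    intro τ h
    have := cp_real h.posSemidef (s := 1) one_ne_zero
    rw [Complex.ofReal_one] at this
    rw [this, mpow_one h.1]
  have sum1 : cp (σ₁ + σ₂) ((-(1/2) : ℝ) * z + (0:ℝ)) * (σ₁ + σ₂) *
      (cp (σ₁ + σ₂) ((-(1/2) : ℝ) * z + (0:ℝ)))ᴴ = 1 := by
    rw [cp_star hσ.1, hs]
    nth_rw 2 [← one hσ]
    rw [cp_mul hσ.1, cp_mul hσ.1, ← cp_zero hσ]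
    congr 1
    push_cast; ring
  have sum2 : (cp (σ₁ + σ₂) ((-(1/2) : ℝ) * z + (0:ℝ)))ᴴ * (σ₁ + σ₂) *
      (cp (σ₁ + σ₂) ((-(1/2) : ℝ) * z + (0:ℝ))) = 1 := by
    rw [cp_star hσ.1, hs]
    nth_rw 2 [← one hσ]
    rw [cp_mul hσ.1, cp_mul hσ.1, ← cp_zero hσ]
    congr 1
    push_cast; ring
  have t1 : ∀ {τ : Mat n}, τ.PosDef → cp τ ((1/2 : ℝ) * z + (0:ℝ)) *
      (cp τ ((1/2 : ℝ) * z + (0:ℝ)))ᴴ = τ := by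
    intro τ h
    rw [cp_star h.1, hs, cp_mul h.1]
    nth_rw 2 [← one h]
    congr 1
    push_cast; ring
  have t2 : ∀ {τ : Mat n}, τ.PosDef → (cp τ ((1/2 : ℝ) * z + (0:ℝ)))ᴴ *
      (cp τ ((1/2 : ℝ) * z + (0:ℝ))) = τ := by
    intro τ h
    rw [cp_star h.1, hs, cp_mul h.1]
    nth_rw 2 [← one h]
    congr 1
    push_cast; ring
  refine row_col_contraction_mat _ _ _ _ _ _ ?_ ?_ (norm_cp_le_one hy₁ (by simp [hz]))
    (norm_cp_le_one hy₂ (by simp [hz]))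
  · have : ∀ S T : Mat n, S * T * (S * T)ᴴ = S * (T * Tᴴ) * Sᴴ := by
      intro S T; simp only [conjTranspose_mul, mul_assoc]
    rw [this, this, t1 h₁, t1 h₂, ← add_mul, ← mul_add, sum1]
  · have : ∀ S T : Mat n, (T * S)ᴴ * (T * S) = Sᴴ * (Tᴴ * T) * S := by
      intro S T; simp only [conjTranspose_mul, mul_assoc]
    rw [this, this, t2 h₁, t2 h₂, ← add_mul, ← mul_add, sum2]

theorem gfam_mid {σ τ y : Mat n} (hσ : σ.PosDef) (hτ : τ.PosDef) (hy : y.PosSemidef) {r p : ℝ}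
    (hrp : r.HolderConjugate p) : gfam σ τ y p ((1/r : ℝ) : ℂ) =
      (mpow σ (-(1/(2*r))) * mpow τ (1/(2*r))) * y * (mpow τ (1/(2*r)) * mpow σ (-(1/(2*r)))) := by
  have hr := hrp.pos
  have hp := hrp.symm.pos
  have a1 : cp σ ((-(1/2) : ℝ) * ((1/r : ℝ) : ℂ) + (0:ℝ)) = mpow σ (-(1/(2*r))) := by
    rw [← cp_real hσ.posSemidef (by simp; positivity)]
    congr 1; push_cast; field_simp; simp
  have a2 : cp τ ((1/2 : ℝ) * ((1/r : ℝ) : ℂ) + (0:ℝ)) = mpow τ (1/(2*r)) := by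
    rw [← cp_real hτ.posSemidef (by positivity)]
    congr 1; push_cast; field_simp; simp
  have a3 : cp y ((-p : ℝ) * ((1/r : ℝ) : ℂ) + (p : ℝ)) = y := by
    have h := cp_real hy (s := 1) one_ne_zero
    rw [mpow_one hy.1] at h
    nth_rw 2 [← h]
    congr 1
    have := hrp.inv_add_inv_eq_one
    rw [← Complex.ofReal_mul, ← Complex.ofReal_add]
    congr 1
    field_simp at this ⊢
    linarith
  rw [gfam, a1, a2, a3]

theorem key {σ₁ σ₂ y₁ y₂ : Mat n} (h₁ : σ₁.PosDef) (h₂ : σ₂.PosDef) (hy₁ : y₁.PosSemidef)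
    (hy₂ : y₂.PosSemidef) {r p : ℝ} (hrp : r.HolderConjugate p) (y : Mat n)
    (hy : y = (mpow (σ₁ + σ₂) (-(1/(2*r))) * mpow σ₁ (1/(2*r))) * y₁ *
        (mpow σ₁ (1/(2*r)) * mpow (σ₁ + σ₂) (-(1/(2*r)))) +
      (mpow (σ₁ + σ₂) (-(1/(2*r))) * mpow σ₂ (1/(2*r))) * y₂ *
        (mpow σ₂ (1/(2*r)) * mpow (σ₁ + σ₂) (-(1/(2*r))))) :
    y.PosSemidef ∧ traceR (mpow y p) ≤ traceR (mpow y₁ p) + traceR (mpow y₂ p) := by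
  have hr := hrp.pos
  have hp := hrp.symm.pos
  have hσ := h₁.add h₂
  have hyp : y.PosSemidef := by
    rw [hy]
    refine PosSemidef.add ?_ ?_
    · have := hy₁.mul_mul_conjTranspose_same (mpow (σ₁ + σ₂) (-(1/(2*r))) * mpow σ₁ (1/(2*r)))
      rwa [conjTranspose_mul, mpow_herm, mpow_herm] at this
    · have := hy₂.mul_mul_conjTranspose_same (mpow (σ₁ + σ₂) (-(1/(2*r))) * mpow σ₂ (1/(2*r)))
      rwa [conjTranspose_mul, mpow_herm, mpow_herm] at this
  refine ⟨hyp, ?_⟩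
  set A := traceR (mpow y₁ p) + traceR (mpow y₂ p) with hA
  set T := traceR (mpow y p) with hT
  have A0 : 0 ≤ A := add_nonneg (traceR_mpow_nonneg hy₁ _) (traceR_mpow_nonneg hy₂ _)
  have T0 : 0 ≤ T := traceR_mpow_nonneg hyp _
  let G : ℂ → Mat n := fun z => cp y ((p:ℝ) * z + (0:ℝ)) *
    (gfam (σ₁ + σ₂) σ₁ y₁ p z + gfam (σ₁ + σ₂) σ₂ y₂ p z)
  have hG : Good G := (Good.cp hyp.1 _ _).mul
    ((gfam_good hσ.1 h₁.1 hy₁.1 p).add (gfam_good hσ.1 h₂.1 hy₂.1 p))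
  have key := Complex.HadamardThreeLines.norm_le_interp_of_mem_verticalClosedStrip₀₁'
    (fun z => (G z).trace) (z := ((1/r : ℝ) : ℂ)) (a := A) (b := T)
    (by
      show ((1/r : ℝ) : ℂ).re ∈ Set.Icc (0:ℝ) 1
      rw [Complex.ofReal_re]
      refine ⟨by positivity, ?_⟩
      rw [div_le_one hr]; exact hrp.lt.le)
    hG.trace_diff.diffContOnCl hG.trace_bdd
    (by
      intro z hz
      have hz : z.re = 0 := hz
      have hY : ‖cp y ((p:ℝ) * z + (0:ℝ))‖ ≤ 1 := norm_cp_le_one hyp (by simp [hz])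
      show ‖(cp y ((p:ℝ) * z + (0:ℝ)) * (_ + _)).trace‖ ≤ A
      rw [mul_add, trace_add]
      exact (norm_add_le _ _).trans (add_le_add
        (gfam_left hσ.posSemidef h₁.posSemidef hy₁ hz hY)
        (gfam_left hσ.posSemidef h₂.posSemidef hy₂ hz hY)))
    (by
      intro z hz
      have hz : z.re = 1 := hz
      show ‖(cp y ((p:ℝ) * z + (0:ℝ)) * (_ + _)).trace‖ ≤ T
      rw [trace_mul_comm]
      refine (norm_trace_mul_cp_le hyp _ _ (gfam_right h₁ h₂ hy₁ hy₂ hz)).trans_eq ?_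
      simp [hz, hT])
  have e : (G ((1/r : ℝ) : ℂ)).trace = (T : ℂ) := by
    have hi := hrp.inv_add_inv_eq_one
    have c1 : cp y ((p:ℝ) * ((1/r : ℝ) : ℂ) + (0:ℝ)) = mpow y (p - 1) := by
      rw [← cp_real hyp (by have := hrp.symm.lt; linarith)]
      congr 1
      rw [← Complex.ofReal_mul, ← Complex.ofReal_add]
      congr 1
      field_simp at hi ⊢
      linarith
    show (cp y _ * (_ + _)).trace = _
    rw [gfam_mid hσ h₁ hy₁ hrp, gfam_mid hσ h₂ hy₂ hrp, ← hy, c1]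
    nth_rw 2 [← mpow_one hyp.1]
    rw [mpow_add hyp (by simpa using hp.ne'), sub_add_cancel, hT, mpow_eq_fc hyp.1, traceR,
      trace_fc hyp.1]
    simp
  have key : T ≤ A ^ (1/p) * T ^ (1/r) := by
    have h2 : (1 - 1/r) = 1/p := by have hi := hrp.inv_add_inv_eq_one; simp only [one_div]; linarith
    simp only [e, Complex.ofReal_re, h2, Complex.norm_real, Real.norm_eq_abs, abs_of_nonneg T0] at key
    exact key
  have := le_of_self_bound hrp.symm T0 (by positivity) key
  exact (Real.rpow_le_rpow_iff T0 A0 (by positivity)).1 this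

end Key

theorem traceR_conjTranspose (A : Mat n) : traceR Aᴴ = traceR A := by
  simp [traceR, trace_conjTranspose]

theorem traceR_cauchy_schwarz (C D : Mat n) :
    traceR (C * D) ≤ √(traceR (C * Cᴴ)) * √(traceR (Dᴴ * D)) := by
  have a0 : 0 ≤ traceR (C * Cᴴ) := psd_traceR_nonneg (posSemidef_self_mul_conjTranspose C)
  have b0 : 0 ≤ traceR (Dᴴ * D) := psd_traceR_nonneg (posSemidef_conjTranspose_mul_self D)
  have h : ∀ s : ℝ, 0 ≤ traceR (C * Cᴴ) * (s * s) + (-2 * traceR (C * D)) * s + traceR (Dᴴ * D) := by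
    intro s
    have h1 := psd_traceR_nonneg (posSemidef_conjTranspose_mul_self (s • Cᴴ - D))
    have h2 : traceR (Dᴴ * Cᴴ) = traceR (C * D) := by
      rw [← conjTranspose_mul, traceR_conjTranspose]
    have h3 : (s • Cᴴ - D)ᴴ * (s • Cᴴ - D) = s • (s • (C * Cᴴ)) - s • (C * D) - s • (Dᴴ * Cᴴ) + Dᴴ * D := by
      rw [conjTranspose_sub, conjTranspose_smul, conjTranspose_conjTranspose]
      simp only [sub_mul, mul_sub, smul_mul_assoc, mul_smul_comm, star_trivial, smul_sub]
      abel
    rw [h3, traceR_add, traceR_sub, traceR_sub, traceR_smul, traceR_smul, traceR_smul, traceR_smul,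
      h2] at h1
    linarith
  have hd := discrim_le_zero h
  unfold discrim at hd
  rw [← Real.sqrt_mul a0]
  apply Real.le_sqrt_of_sq_le
  nlinarith

theorem holder_core (A B : Mat n) {r : ℝ} (hr : 1 ≤ r) :
    traceR (mpow ((A * B)ᴴ * (A * B)) (r/2)) ≤
      √(traceR (A * Aᴴ * (A * B * mpow ((A * B)ᴴ * (A * B)) (-1/2) *
        mpow ((A * B)ᴴ * (A * B)) ((r-1)/2) * mpow ((A * B)ᴴ * (A * B)) (-1/2) * (A * B)ᴴ))) *
      √(traceR (Bᴴ * B * mpow ((A * B)ᴴ * (A * B)) ((r-1)/2))) := by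
  set H := (A * B)ᴴ * (A * B) with hH
  have hHp : H.PosSemidef := posSemidef_conjTranspose_mul_self _
  obtain ⟨Q, hQ, hQQ⟩ : ∃ Q : Mat n, Qᴴ = Q ∧ Q * Q = mpow H ((r-1)/2) := by
    rcases hr.eq_or_lt with h | h
    · refine ⟨1, conjTranspose_one, ?_⟩
      rw [← h]; norm_num; rw [mpow_zero hHp.1]
    · refine ⟨mpow H ((r-1)/4), mpow_herm _ _, ?_⟩
      rw [mpow_add hHp (by linarith)]; congr 1; ring
  have h := traceR_cauchy_schwarz (Q * mpow H (-1/2) * (A * B)ᴴ * A) (B * Q)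
  have e0 : traceR (Q * mpow H (-1/2) * (A * B)ᴴ * A * (B * Q)) = traceR (mpow H (r/2)) := by
    have : Q * mpow H (-1/2) * (A * B)ᴴ * A * (B * Q) = (Q * (mpow H (-1/2) * H)) * Q := by
      rw [hH]; simp only [mul_assoc]
    rw [this, traceR_comm, ← mul_assoc, hQQ]
    nth_rw 3 [← mpow_one hHp.1]
    rw [mpow_add hHp (by norm_num), mpow_add hHp (by norm_num; linarith)]
    congr 2; ring
  have e1 : traceR ((Q * mpow H (-1/2) * (A * B)ᴴ * A) * (Q * mpow H (-1/2) * (A * B)ᴴ * A)ᴴ) =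
      traceR (A * Aᴴ * (A * B * mpow H (-1/2) * mpow H ((r-1)/2) * mpow H (-1/2) * (A * B)ᴴ)) := by
    rw [← hQQ]
    have : (Q * mpow H (-1/2) * (A * B)ᴴ * A) * (Q * mpow H (-1/2) * (A * B)ᴴ * A)ᴴ =
      (Q * mpow H (-1/2) * (A * B)ᴴ) * (A * Aᴴ * (A * B * mpow H (-1/2) * Q)) := by
      have g : ∀ Z : Mat n, (Z * A) * (Z * A)ᴴ = Z * (A * Aᴴ * Zᴴ) := by
        intro Z; rw [conjTranspose_mul]; simp only [mul_assoc]
      have g2 : ∀ Y Z : Mat n, Zᴴ = Z → (Q * Z * Yᴴ)ᴴ = Y * Z * Q := by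
        intro Y Z hZ
        simp only [conjTranspose_mul, conjTranspose_conjTranspose, hQ, hZ, mul_assoc]
      rw [g, g2 _ _ (mpow_herm _ _)]
    rw [this, traceR_comm]
    simp only [mul_assoc]
  have e2 : traceR ((B * Q)ᴴ * (B * Q)) = traceR (Bᴴ * B * mpow H ((r-1)/2)) := by
    rw [← hQQ, conjTranspose_mul, hQ, mul_assoc, traceR_comm]
    simp only [mul_assoc]
  rw [e0, e1, e2] at h
  exact h

theorem schatten_holder (A B : Mat n) {r : ℝ} (hr : 1 ≤ r) :
    (traceR (mpow ((A * B)ᴴ * (A * B)) (r/2))) ^ (1/r) ≤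
      (traceR (mpow (A * Aᴴ) r)) ^ (1/(2*r)) * (traceR (mpow (Bᴴ * B) r)) ^ (1/(2*r)) := by
  have hc := holder_core A B hr
  set X := A * B with hX
  set H := Xᴴ * X with hH
  have hHp : H.PosSemidef := posSemidef_conjTranspose_mul_self _
  have hAp : (A * Aᴴ).PosSemidef := posSemidef_self_mul_conjTranspose _
  have hBp : (Bᴴ * B).PosSemidef := posSemidef_conjTranspose_mul_self _
  have hsq : ∀ {t : ℝ}, 0 ≤ t → √(t ^ (1/r)) = t ^ (1/(2*r)) := by
    intro t ht
    rw [Real.sqrt_eq_rpow, ← Real.rpow_mul ht]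
    congr 1
    field_simp
  rcases hr.eq_or_lt with h | h
  · subst h
    rw [show ((1:ℝ) - 1)/2 = 0 by norm_num, mpow_zero hHp.1, mul_one, mul_one] at hc
    rw [show (1:ℝ)/1 = 1 by norm_num, Real.rpow_one, show (1:ℝ)/(2*1) = 1/2 by norm_num]
    rw [mpow_one hAp.1, mpow_one hBp.1, ← Real.sqrt_eq_rpow, ← Real.sqrt_eq_rpow]
    refine hc.trans (mul_le_mul_of_nonneg_right (Real.sqrt_le_sqrt ?_) (Real.sqrt_nonneg _))
    set P := X * mpow H (-1/2) * mpow H (-1/2) * Xᴴ with hP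
    have e1 : mpow H (-1/2) * mpow H (-1/2) = mpow H (-1) := by
      rw [mpow_add hHp (by norm_num)]; norm_num
    have hP' : P = X * mpow H (-1) * Xᴴ := by rw [hP, mul_assoc X, e1]
    have e2 : mpow H (-1) * H * mpow H (-1) = mpow H (-1) := by
      have : H = mpow H (1/2) * mpow H (1/2) := by
        rw [mpow_add hHp (by norm_num)]; norm_num; rw [mpow_one hHp.1]
      calc mpow H (-1) * H * mpow H (-1)
          = (mpow H (-1) * mpow H (1/2)) * (mpow H (1/2) * mpow H (-1)) := by
            nth_rw 2 [this]; simp only [mul_assoc]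
        _ = _ := by
            rw [mpow_add hHp (by norm_num), mpow_add hHp (by norm_num), mpow_add hHp (by norm_num)]
            norm_num
    have PP : P * P = P := by
      rw [hP']
      calc X * mpow H (-1) * Xᴴ * (X * mpow H (-1) * Xᴴ) =
          X * (mpow H (-1) * H * mpow H (-1)) * Xᴴ := by rw [hH]; simp only [mul_assoc]
        _ = _ := by rw [e2]
    have PH : Pᴴ = P := by
      rw [hP']; simp only [conjTranspose_mul, mpow_herm, conjTranspose_conjTranspose, mul_assoc]
    have hps : (1 - P).PosSemidef := by
      have : 1 - P = (1 - P)ᴴ * (1 - P) := by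
        rw [conjTranspose_sub, conjTranspose_one, PH, sub_mul, one_mul, mul_sub, mul_one, PP]
        simp
      rw [this]; exact posSemidef_conjTranspose_mul_self _
    have := traceR_mul_le hps hAp
    rw [one_mul, traceR_comm] at this
    exact this
  · set p := r / (r - 1) with hp
    have hrp : r.HolderConjugate p := Real.HolderConjugate.conjExponent h
    have hr0 := hrp.pos
    have hp0 := hrp.symm.pos
    have hrp1 : (r - 1) * p = r := by rw [hp]; field_simp [sub_ne_zero.2 h.ne']
    set T := traceR (mpow H (r/2)) with hT
    have T0 : 0 ≤ T := traceR_mpow_nonneg hHp _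
    set M := X * mpow H (-1/2) * mpow H ((r-1)/4) with hM
    have hW : mpow H ((r-1)/4) * mpow H ((r-1)/4) = mpow H ((r-1)/2) := by
      rw [mpow_add hHp (by linarith)]; congr 1; ring
    have hMM : X * mpow H (-1/2) * mpow H ((r-1)/2) * mpow H (-1/2) * Xᴴ = M * Mᴴ := by
      rw [← hW, hM]; simp only [conjTranspose_mul, mpow_herm, mul_assoc]
    have hMM2 : Mᴴ * M = mpow H ((r-1)/2) := by
      have : Mᴴ * M = mpow H ((r-1)/4) * (mpow H (-1/2) * H) * mpow H (-1/2) * mpow H ((r-1)/4) := by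
        rw [hM, hH]; simp only [conjTranspose_mul, mpow_herm, mul_assoc]
      rw [this]
      nth_rw 3 [← mpow_one hHp.1]
      rw [mpow_add hHp (by norm_num), mpow_add hHp (by norm_num; linarith),
        mpow_add hHp (by norm_num; linarith), mpow_add hHp (by norm_num; linarith)]
      congr 1; ring
    have hTp : traceR (mpow (mpow H ((r-1)/2)) p) = T := by
      rw [mpow_mpow hHp, hT]; congr 2; linarith
    rw [hMM] at hc
    have h1 := holder_psd hAp (posSemidef_self_mul_conjTranspose M) hrp
    rw [← traceR_mpow_comm M, hMM2, hTp] at h1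
    have h2 := holder_psd hBp (mpow_psd hHp ((r-1)/2)) hrp
    rw [hTp] at h2
    have a0 := traceR_mpow_nonneg hAp r
    have b0 := traceR_mpow_nonneg hBp r
    refine le_of_self_bound hrp T0 (by positivity) (hc.trans ?_)
    refine (mul_le_mul (Real.sqrt_le_sqrt h1) (Real.sqrt_le_sqrt h2) (Real.sqrt_nonneg _)
      (Real.sqrt_nonneg _)).trans_eq ?_
    rw [Real.sqrt_mul (by positivity), Real.sqrt_mul (by positivity), hsq a0, hsq b0]
    have := Real.mul_self_sqrt (show 0 ≤ T ^ (1/p) by positivity)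
    linear_combination (traceR (mpow (A * Aᴴ) r)) ^ (1/(2*r)) *
      (traceR (mpow (Bᴴ * B) r)) ^ (1/(2*r)) * this

theorem pd_traceR_pos [Nonempty n] {A : Mat n} (h : A.PosDef) : 0 < traceR A := by
  rw [← mpow_one h.1, traceR_mpow h.1]
  exact Finset.sum_pos (fun i _ => Real.rpow_pos_of_pos (h.eigenvalues_pos i) _) Finset.univ_nonempty

theorem smul_real_mem {N : StarSubalgebra ℂ (Mat n)} {A : Mat n} (hA : A ∈ N) (c : ℝ) : c • A ∈ N := by
  have : c • A = (c : ℂ) • A := by ext i j; simp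
  rw [this]; exact N.smul_mem hA _

theorem traceR_mpow_add_eps {q : Mat n} (hq : q.PosSemidef) (r ε : ℝ) :
    traceR (mpow (q + ε • (1 : Mat n)) r) = ∑ i, (hq.1.eigenvalues i + ε) ^ r := by
  have h' : IsSelfAdjoint q := hq.1
  have e : q + ε • (1 : Mat n) = cfc (fun x => x + ε) q := by
    have h1 := cfc_add (R := ℝ) (a := q) (fun x => x) (fun _ => ε) (contSpec _ _) (contSpec _ _)
    rw [h1, cfc_id' ℝ q, cfc_const ε q, Algebra.algebraMap_eq_smul_one]
  rw [e, mpow, cfc_comp_mat hq.1, traceR_cfc hq.1]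

theorem mpow_half_sq {x : Mat n} (hx : x.PosSemidef) : mpow x (1/2) * mpow x (1/2) = x := by
  rw [mpow_add hx (by norm_num)]; norm_num; exact mpow_one hx.1

theorem feas [Nonempty n] {N : StarSubalgebra ℂ (Mat n)} {x : Mat n} (hx : x.PosSemidef) {r : ℝ}
    (hr : 1 ≤ r)
    (hb : ∀ σ ∈ N, σ.PosDef → traceR σ = 1 →
      traceR (mpow (mpow σ (1/(2*r)) * x * mpow σ (1/(2*r))) r) ≤ 1) :
    ∀ a b : Mat n, a ∈ N → b ∈ N → snorm r (a * x * b) ≤ snorm (2 * r) a * snorm (2 * r) b := by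
  have hr0 : 0 < r := by linarith
  have s1 : ∀ τ ∈ N, τ.PosDef →
      traceR (mpow (mpow τ (1/(2*r)) * x * mpow τ (1/(2*r))) r) ≤ traceR τ := by
    intro τ hτ hτp
    set t := traceR τ with ht
    have t0 : 0 < t := pd_traceR_pos hτp
    set σ := t⁻¹ • τ with hσ
    have hσp : σ.PosDef := pd_smul hτp (by positivity)
    have e : τ = t • σ := by rw [hσ, smul_smul, mul_inv_cancel₀ t0.ne', one_smul]
    have h1 := hb σ (smul_real_mem hτ _) hσp (by rw [hσ, traceR_smul, inv_mul_cancel₀ t0.ne'])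
    have hz : (mpow σ (1/(2*r)) * x * mpow σ (1/(2*r))).PosSemidef := by
      have := hx.mul_mul_conjTranspose_same (mpow σ (1/(2*r)))
      rwa [mpow_herm] at this
    have e2 : mpow τ (1/(2*r)) * x * mpow τ (1/(2*r)) =
        t ^ (1/r) • (mpow σ (1/(2*r)) * x * mpow σ (1/(2*r))) := by
      rw [e, mpow_smul hσp.posSemidef t0.le]
      simp only [smul_mul_assoc, mul_smul_comm, smul_smul]
      rw [← Real.rpow_add t0]
      congr 2
      field_simp; norm_num
    rw [e2, mpow_smul hz (by positivity), traceR_smul, ← Real.rpow_mul t0.le,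
      one_div_mul_cancel hr0.ne', Real.rpow_one]
    nlinarith
  have s2 : ∀ q ∈ N, q.PosSemidef →
      traceR (mpow (mpow x (1/2) * q * mpow x (1/2)) r) ≤ traceR (mpow q r) := by
    intro q hqN hq
    have key : ∀ ε : ℝ, 0 < ε → traceR (mpow (mpow x (1/2) * q * mpow x (1/2)) r) ≤
        ∑ i, (hq.1.eigenvalues i + ε) ^ r := by
      intro ε hε
      rw [← traceR_mpow_add_eps hq]
      set qe := q + ε • (1 : Mat n) with hqe
      have hqe1 : qe.PosDef := by
        have : (ε • (1 : Mat n)).PosDef := pd_smul PosDef.one hε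
        exact this.posSemidef_add hq
      have hqeN : qe ∈ N := N.add_mem hqN (smul_real_mem N.one_mem _)
      have h1 := s1 (mpow qe r) (mpow_mem hqeN _) (mpow_pd hqe1 _)
      rw [mpow_mpow hqe1.posSemidef, show r * (1/(2*r)) = 1/2 by field_simp] at h1
      refine le_trans ?_ h1
      set M := mpow qe (1/2) * mpow x (1/2) with hM
      have e1 : mpow qe (1/2) * x * mpow qe (1/2) = M * Mᴴ := by
        rw [hM, conjTranspose_mul, mpow_herm, mpow_herm]
        nth_rw 1 [← mpow_half_sq hx]
        simp only [mul_assoc]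
      have e2 : Mᴴ * M = mpow x (1/2) * qe * mpow x (1/2) := by
        rw [hM, conjTranspose_mul, mpow_herm, mpow_herm]
        have g := mpow_half_sq hqe1.posSemidef
        calc _ = mpow x (1/2) * (mpow qe (1/2) * mpow qe (1/2)) * mpow x (1/2) := by
              simp only [mul_assoc]
          _ = _ := by rw [g]
      rw [e1, ← traceR_mpow_comm, e2]
      refine trace_mpow_mono ?_ ?_ hr
      · have := hq.mul_mul_conjTranspose_same (mpow x (1/2))
        rwa [mpow_herm] at this
      · rw [← sub_mul, ← mul_sub, hqe, add_sub_cancel_left]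
        have := (psd_smul (PosSemidef.one (n := n) (R := ℂ)) hε.le).mul_mul_conjTranspose_same (mpow x (1/2))
        rwa [mpow_herm] at this
    rw [traceR_mpow hq.1]
    have hcont : Continuous (fun ε : ℝ => ∑ i, (hq.1.eigenvalues i + ε) ^ r) := by
      refine continuous_finsetSum _ fun i _ => ?_
      exact (continuous_const.add continuous_id).rpow_const (fun _ => Or.inr hr0.le)
    have ht : Filter.Tendsto (fun ε : ℝ => ∑ i, (hq.1.eigenvalues i + ε) ^ r) (nhdsWithin 0 (Set.Ioi 0))
        (nhds (∑ i, (hq.1.eigenvalues i) ^ r)) := by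
      have := (hcont.tendsto 0).mono_left (nhdsWithin_le_nhds (s := Set.Ioi 0))
      simpa using this
    exact ge_of_tendsto ht (Filter.eventually_of_mem self_mem_nhdsWithin fun ε hε => key ε hε)
  intro a b ha hb'
  have h := schatten_holder (a * mpow x (1/2)) (mpow x (1/2) * b) hr
  have e1 : a * mpow x (1/2) * (mpow x (1/2) * b) = a * x * b := by
    nth_rw 3 [← mpow_half_sq hx]; simp only [mul_assoc]
  rw [e1] at h
  unfold snorm
  refine h.trans ?_
  have ha' := s2 (aᴴ * a) (N.mul_mem (star_mem (S := StarSubalgebra ℂ (Mat n)) ha : aᴴ ∈ N) ha) (posSemidef_conjTranspose_mul_self a)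
  have hb'' := s2 (b * bᴴ) (N.mul_mem hb' (star_mem (S := StarSubalgebra ℂ (Mat n)) hb' : bᴴ ∈ N)) (posSemidef_self_mul_conjTranspose b)
  have f1 : traceR (mpow (a * mpow x (1/2) * (a * mpow x (1/2))ᴴ) r) ≤ traceR (mpow (aᴴ * a) (2*r/2)) := by
    rw [← traceR_mpow_comm, conjTranspose_mul, mpow_herm, mul_div_cancel_left₀ _ two_ne_zero]
    simpa only [mul_assoc] using ha'
  have f2 : traceR (mpow ((mpow x (1/2) * b)ᴴ * (mpow x (1/2) * b)) r) ≤
      traceR (mpow (bᴴ * b) (2*r/2)) := by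
    rw [traceR_mpow_comm, conjTranspose_mul, mpow_herm, mul_div_cancel_left₀ _ two_ne_zero,
      traceR_mpow_comm b]
    simpa only [mul_assoc] using hb''
  have n1 : 0 ≤ traceR (mpow (a * mpow x (1/2) * (a * mpow x (1/2))ᴴ) r) :=
    traceR_mpow_nonneg (posSemidef_self_mul_conjTranspose _) _
  have n2 : 0 ≤ traceR (mpow ((mpow x (1/2) * b)ᴴ * (mpow x (1/2) * b)) r) :=
    traceR_mpow_nonneg (posSemidef_conjTranspose_mul_self _) _
  have n3 := traceR_mpow_nonneg (posSemidef_conjTranspose_mul_self a) (2*r/2)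
  gcongr

/-- Hermitian part -/
def hp (h : Mat n) : Mat n := (1/2 : ℝ) • (h + hᴴ)

theorem hp_herm (h : Mat n) : (hp h).IsHermitian := by
  unfold hp IsHermitian
  rw [conjTranspose_smul, conjTranspose_add, conjTranspose_conjTranspose, add_comm]
  simp

theorem hp_of_herm {h : Mat n} (hh : h.IsHermitian) : hp h = h := by
  unfold hp
  rw [show hᴴ = h from hh, ← two_smul ℝ h, smul_smul]; norm_num

theorem hp_add (a b : Mat n) : hp (a + b) = hp a + hp b := by
  unfold hp; rw [conjTranspose_add, ← smul_add]; congr 1; abel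

theorem hp_smul (c : ℝ) (a : Mat n) : hp (c • a) = c • hp a := by
  unfold hp; rw [conjTranspose_smul, star_trivial, ← smul_add, smul_comm]

theorem hp_cont : Continuous (hp : Mat n → Mat n) := by
  unfold hp
  have h : Continuous (fun h : Mat n => h) := continuous_id
  exact (h.add h.matrix_conjTranspose).const_smul (1/2 : ℝ)

theorem herm_eq_fc {A : Mat n} (h : A.IsHermitian) : A = fc A (fun x => ((x : ℝ) : ℂ)) := by
  have : IsSelfAdjoint A := h
  nth_rw 1 [← cfc_id' ℝ A]
  exact cfc_eq_fc h _

theorem sub_smul_one_eq {A : Mat n} (h : A.IsHermitian) (c d : ℝ) :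
    c • A + d • (1 : Mat n) = fc A (fun x => ((c * x + d : ℝ) : ℂ)) := by
  nth_rw 1 [herm_eq_fc h]
  rw [← fc_one h, fc_def h, fc_def h, fc_def h]
  have g : ∀ (u v : Mat n) (a b : Mat n), c • (u * a * v) + d • (u * b * v) =
      u * (c • a + d • b) * v := by
    intro u v a b
    simp only [mul_add, add_mul, smul_mul_assoc, mul_smul_comm]
  rw [g]
  congr 2
  ext i j
  by_cases hij : i = j
  · subst hij; simp
  · simp [hij]

theorem pd_eps [Nonempty n] {A : Mat n} (hA : A.PosDef) :
    ∃ δ : ℝ, 0 < δ ∧ (A - δ • (1 : Mat n)).PosSemidef := by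
  obtain ⟨i, hi⟩ := Finite.exists_min hA.1.eigenvalues
  refine ⟨hA.1.eigenvalues i, hA.eigenvalues_pos i, ?_⟩
  have := sub_smul_one_eq hA.1 1 (-(hA.1.eigenvalues i))
  rw [one_smul, neg_smul, ← sub_eq_add_neg] at this
  rw [this]
  exact fc_posSemidef hA.1 _ fun j => by simpa using hi j

section Top
open scoped Matrix.Norms.L2Operator

theorem small_pd {E : Mat n} (hE : E.IsHermitian) {δ : ℝ} (hδ : 0 < δ) (h : ‖E‖ < δ) :
    (δ • (1 : Mat n) - E).PosDef := by
  have := sub_smul_one_eq hE (-1) δ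
  rw [neg_smul, one_smul, add_comm, ← sub_eq_add_neg] at this
  rw [this]
  refine fc_posDef hE _ fun j => ?_
  rw [herm_eq_fc hE, norm_fc hE, pi_norm_lt_iff hδ] at h
  have h2 := h j
  rw [Complex.norm_real, Real.norm_eq_abs] at h2
  have := le_abs_self (hE.eigenvalues j)
  linarith

theorem isOpen_pd [Nonempty n] (B : Mat n) : IsOpen {h : Mat n | (B - hp h).PosDef} := by
  rw [isOpen_iff_mem_nhds]
  intro h₀ (hh : (B - hp h₀).PosDef)
  obtain ⟨δ, δ0, hδ⟩ := pd_eps hh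
  have hc : Continuous (fun h : Mat n => ‖hp h - hp h₀‖) := (hp_cont.sub continuous_const).norm
  have : {h : Mat n | ‖hp h - hp h₀‖ < δ} ∈ nhds h₀ :=
    (isOpen_lt hc continuous_const).mem_nhds (by simpa using δ0)
  refine Filter.mem_of_superset this fun h (hlt : ‖hp h - hp h₀‖ < δ) => ?_
  have h1 := small_pd ((hp_herm h).sub (hp_herm h₀)) δ0 hlt
  have h2 := h1.add_posSemidef hδ
  show (B - hp h).PosDef
  convert h2 using 1
  abel

end Top

theorem exists_rep (f : Mat n →ₗ[ℝ] ℝ) : ∃ x : Mat n, x.IsHermitian ∧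
    ∀ h : Mat n, h.IsHermitian → f h = traceR (x * h) := by
  let X : Mat n := Matrix.of fun j i =>
    (f (single i j 1) : ℂ) - Complex.I * (f (single i j Complex.I) : ℂ)
  have hX : ∀ h : Mat n, f h = traceR (X * h) := by
    intro h
    have e : h = ∑ i, ∑ j, ((h i j).re • (single i j (1:ℂ) : Mat n) +
        (h i j).im • (single i j Complex.I : Mat n)) := by
      nth_rw 1 [matrix_eq_sum_single h]
      refine Finset.sum_congr rfl fun i _ => Finset.sum_congr rfl fun j _ => ?_
      rw [smul_single, smul_single, ← single_add]
      congr 1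
      apply Complex.ext <;> simp
    conv_lhs => rw [e]
    simp only [map_sum, map_add, map_smul, smul_eq_mul]
    rw [traceR, trace]
    simp only [diag_apply, mul_apply, Complex.re_sum]
    rw [Finset.sum_comm]
    refine Finset.sum_congr rfl fun i _ => Finset.sum_congr rfl fun j _ => ?_
    simp [X]
    ring
  refine ⟨hp X, hp_herm X, fun h hh => ?_⟩
  rw [hX, hp, smul_mul_assoc, traceR_smul, add_mul, traceR_add]
  have : traceR (Xᴴ * h) = traceR (X * h) := by
    rw [← traceR_conjTranspose, conjTranspose_mul, conjTranspose_conjTranspose, show hᴴ = h from hh,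
      traceR_comm]
  rw [this]; ring

theorem psd_of_trace {x : Mat n} (hx : x.IsHermitian)
    (h : ∀ y : Mat n, y.PosSemidef → 0 ≤ traceR (x * y)) : x.PosSemidef := by
  rw [hx.posSemidef_iff_eigenvalues_nonneg]
  have hy := fc_posSemidef hx (fun t => if t < 0 then 1 else 0) (fun i => by split_ifs <;> norm_num)
  have h1 := h _ hy
  nth_rw 1 [herm_eq_fc hx] at h1
  rw [fc_mul hx, traceR, trace_fc hx, Complex.re_sum] at h1
  intro i
  by_contra! hneg
  have hneg : hx.eigenvalues i < 0 := hneg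
  refine absurd h1 (not_le.2 ?_)
  refine Finset.sum_neg' (fun j _ => ?_) ⟨i, Finset.mem_univ i, ?_⟩
  · split_ifs with h2
    · simpa using h2.le
    · simp
  · simp [hneg]

/-- conjugation by a power of `σ` -/
def sw (r : ℝ) (σ y : Mat n) : Mat n := mpow σ (1/(2*r)) * y * mpow σ (1/(2*r))

theorem sw_psd {r : ℝ} {σ y : Mat n} (hy : y.PosSemidef) : (sw r σ y).PosSemidef := by
  have := hy.mul_mul_conjTranspose_same (mpow σ (1/(2*r)))
  rwa [mpow_herm] at this

theorem sw_pd {r : ℝ} {σ y : Mat n} (hσ : σ.PosDef) (hy : y.PosDef) : (sw r σ y).PosDef := by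
  have := hy.mul_mul_conjTranspose_same (B := mpow σ (1/(2*r)))
    (vecMul_injective_of_isUnit (mpow_pd hσ _).isUnit)
  rwa [mpow_herm] at this

theorem traceR_sw (r : ℝ) (σ x y : Mat n) : traceR (sw r σ x * y) = traceR (x * sw r σ y) := by
  unfold sw
  rw [mul_assoc, mul_assoc, traceR_comm]
  simp only [mul_assoc]

theorem alternative [Nonempty n] (N : StarSubalgebra ℂ (Mat n)) (r : ℝ) (K : Set (Mat n))
    (K0 : ∀ y ∈ K, y.PosSemidef) (K1 : ∃ y ∈ K, y.PosDef)
    (K2 : ∀ σ₁ σ₂ y₁ y₂ : Mat n, σ₁.PosDef → σ₂.PosDef → y₁ ∈ K → y₂ ∈ K → ∀ t₁ t₂ : ℝ,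
      0 < t₁ → 0 < t₂ → t₁ + t₂ = 1 → ∃ y ∈ K, sw r (t₁ • σ₁ + t₂ • σ₂) y =
        t₁ • sw r σ₁ y₁ + t₂ • sw r σ₂ y₂)
    (K3 : ∀ z : Mat n, z.PosSemidef → (∀ y ∈ K, traceR (z * y) ≤ 1) → traceR (mpow z r) ≤ 1)
    (ρ : Mat n) (hρ : ρ.PosSemidef) (c : ℝ) (hc : 0 < c) :
    (∃ σ ∈ N, σ.PosDef ∧ traceR σ = 1 ∧ ∃ y ∈ K, (c • sw r σ y - ρ).PosDef) ∨
    (∃ x : Mat n, x.PosSemidef ∧ traceR (x * ρ) = c ∧ ∀ σ ∈ N, σ.PosDef → traceR σ = 1 →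
      traceR (mpow (sw r σ x) r) ≤ 1) := by
  let U : Set (Mat n) := {h | ∃ σ ∈ N, σ.PosDef ∧ traceR σ = 1 ∧ ∃ y ∈ K, (sw r σ y - hp h).PosDef}
  have Uopen : IsOpen U := by
    have : U = ⋃ σ ∈ {σ : Mat n | σ ∈ N ∧ σ.PosDef ∧ traceR σ = 1}, ⋃ y ∈ K,
        {h : Mat n | (sw r σ y - hp h).PosDef} := by
      ext h; simp [U, and_assoc]
    rw [this]
    exact isOpen_biUnion fun σ _ => isOpen_biUnion fun y _ => isOpen_pd _
  have Uconv : Convex ℝ U := by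
    rw [convex_iff_forall_pos]
    rintro h₁ ⟨σ₁, hσ₁, p₁, tr₁, y₁, hy₁, d₁⟩ h₂ ⟨σ₂, hσ₂, p₂, tr₂, y₂, hy₂, d₂⟩ a b ha hb hab
    obtain ⟨y, hy, e⟩ := K2 σ₁ σ₂ y₁ y₂ p₁ p₂ hy₁ hy₂ a b ha hb hab
    refine ⟨a • σ₁ + b • σ₂, N.add_mem (smul_real_mem hσ₁ _) (smul_real_mem hσ₂ _),
      (pd_smul p₁ ha).add (pd_smul p₂ hb), ?_, y, hy, ?_⟩
    · rw [traceR_add, traceR_smul, traceR_smul, tr₁, tr₂]; linarith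
    · rw [e, hp_add, hp_smul, hp_smul]
      have := (pd_smul d₁ ha).add (pd_smul d₂ hb)
      rw [smul_sub, smul_sub] at this
      convert this using 1
      abel
  obtain ⟨y₀, hy₀, yp₀⟩ := K1
  obtain ⟨σ₀, hσ₀, sp₀, str₀⟩ : ∃ σ ∈ N, σ.PosDef ∧ traceR σ = 1 := by
    have t0 : 0 < traceR (1 : Mat n) := pd_traceR_pos PosDef.one
    refine ⟨(traceR (1 : Mat n))⁻¹ • 1, smul_real_mem N.one_mem _,
      pd_smul PosDef.one (by positivity), ?_⟩
    rw [traceR_smul, inv_mul_cancel₀ t0.ne']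
  have Uneg : ∀ h : Mat n, h.PosSemidef → -h ∈ U := by
    intro h hh
    refine ⟨σ₀, hσ₀, sp₀, str₀, y₀, hy₀, ?_⟩
    rw [hp_of_herm hh.1.neg, sub_neg_eq_add]
    exact (sw_pd sp₀ yp₀).add_posSemidef hh
  by_cases hmem : c⁻¹ • ρ ∈ U
  · left
    obtain ⟨σ, hσ, p1, tr, y, hy, d⟩ := hmem
    refine ⟨σ, hσ, p1, tr, y, hy, ?_⟩
    rw [hp_of_herm (psd_smul hρ (by positivity)).1] at d
    have := pd_smul d hc
    rwa [smul_sub, smul_smul, mul_inv_cancel₀ hc.ne', one_smul] at this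
  · right
    obtain ⟨f, hf⟩ := geometric_hahn_banach_open_point Uconv Uopen hmem
    set s := f (c⁻¹ • ρ) with hs
    have s0 : 0 < s := by
      have := hf _ (Uneg 0 PosSemidef.zero)
      simpa using this
    obtain ⟨x, hx, hxf⟩ := exists_rep (f : Mat n →ₗ[ℝ] ℝ)
    have hxf : ∀ h : Mat n, h.IsHermitian → f h = traceR (x * h) := hxf
    have xpsd : x.PosSemidef := by
      refine psd_of_trace hx fun y hy => ?_
      by_contra! hneg
      set t := traceR (x * y) with ht
      have h1 := hf _ (Uneg ((s / (-t)) • y) (psd_smul hy (div_nonneg s0.le (by linarith))))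
      rw [map_neg, map_smul, hxf y hy.1, ← ht, smul_eq_mul] at h1
      have : s / (-t) * t = -s := by field_simp [hneg.ne]
      linarith
    have hbd : ∀ σ ∈ N, σ.PosDef → traceR σ = 1 → ∀ y ∈ K, traceR (x * sw r σ y) ≤ s := by
      intro σ hσ p1 tr y hy
      have hps : (sw r σ y).PosSemidef := sw_psd (K0 y hy)
      have h1 : ∀ ε : ℝ, 0 < ε → traceR (x * sw r σ y) - ε * traceR x ≤ s := by
        intro ε hε
        have hH : (sw r σ y - ε • (1 : Mat n)).IsHermitian :=
          hps.1.sub (psd_smul PosSemidef.one hε.le).1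
        have hU : sw r σ y - ε • (1 : Mat n) ∈ U := by
          refine ⟨σ, hσ, p1, tr, y, hy, ?_⟩
          rw [hp_of_herm hH, sub_sub_cancel]
          exact pd_smul PosDef.one hε
        have h2 := hf _ hU
        rw [hxf _ hH, mul_sub, traceR_sub, mul_smul_comm, traceR_smul, mul_one] at h2
        exact h2.le
      have x0 := psd_traceR_nonneg xpsd
      refine le_of_forall_pos_le_add fun ε hε => ?_
      have h2 := h1 (ε / (traceR x + 1)) (by positivity)
      have h3 : ε / (traceR x + 1) * traceR x ≤ ε := by
        rw [div_mul_eq_mul_div, div_le_iff₀ (by positivity)]; nlinarith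
      linarith
    refine ⟨s⁻¹ • x, psd_smul xpsd (by positivity), ?_, ?_⟩
    · rw [smul_mul_assoc, traceR_smul, ← hxf ρ hρ.1]
      have : s = c⁻¹ * f ρ := by rw [hs, map_smul, smul_eq_mul]
      have hfρ : f ρ = c * s := by rw [this]; field_simp
      rw [hfρ]; field_simp
    · intro σ hσ p1 tr
      refine K3 _ (sw_psd (psd_smul xpsd (by positivity))) fun y hy => ?_
      rw [traceR_sw, smul_mul_assoc, traceR_smul]
      have := hbd σ hσ p1 tr y hy
      rw [inv_mul_le_iff₀ s0]; linarith

theorem alternative_one [Nonempty n] (N : StarSubalgebra ℂ (Mat n))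
    (ρ : Mat n) (hρ : ρ.PosSemidef) (c : ℝ) (hc : 0 < c) :
    (∃ σ ∈ N, σ.PosDef ∧ traceR σ = 1 ∧ (c • σ - ρ).PosDef) ∨
    (∃ x : Mat n, x.PosSemidef ∧ traceR (x * ρ) = c ∧ ∀ σ ∈ N, σ.PosDef → traceR σ = 1 →
      traceR (mpow (sw 1 σ x) 1) ≤ 1) := by
  have sw1 : ∀ σ : Mat n, σ.PosDef → sw 1 σ 1 = σ := by
    intro σ h
    rw [sw, mul_one, mul_one, mpow_half_sq h.posSemidef]
  rcases alternative N 1 {(1 : Mat n)} (by rintro _ rfl; exact PosSemidef.one)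
    ⟨1, rfl, PosDef.one⟩ (by
      rintro σ₁ σ₂ _ _ p₁ p₂ rfl rfl t₁ t₂ h₁ h₂ _
      refine ⟨1, rfl, ?_⟩
      rw [sw1 _ p₁, sw1 _ p₂, sw1 _ ((pd_smul p₁ h₁).add (pd_smul p₂ h₂))]) (by
      intro z hz h
      have := h 1 rfl
      rwa [mpow_one hz.1, ← mul_one z]) ρ hρ c hc with h | h
  · left
    obtain ⟨σ, hσ, p1, tr, y, rfl, h⟩ := h
    rw [sw1 _ p1] at h
    exact ⟨σ, hσ, p1, tr, h⟩
  · right; exact h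

theorem sw_smul {r p : ℝ} (hrp : r.HolderConjugate p) {σ : Mat n} (hσ : σ.PosSemidef) (y : Mat n)
    {t : ℝ} (ht : 0 < t) : sw r (t • σ) (t ^ (1/p) • y) = t • sw r σ y := by
  have hr := hrp.pos
  have hp := hrp.symm.pos
  have hi := hrp.inv_add_inv_eq_one
  unfold sw
  rw [mpow_smul hσ ht.le]
  simp only [smul_mul_assoc, mul_smul_comm, smul_smul]
  rw [← Real.rpow_add ht, ← Real.rpow_add ht]
  have : 1 / (2 * r) + (1 / p + 1 / (2 * r)) = 1 := by
    field_simp at hi ⊢; linarith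
  rw [this, Real.rpow_one]

theorem alternative_lt [Nonempty n] (N : StarSubalgebra ℂ (Mat n)) {r p : ℝ}
    (hrp : r.HolderConjugate p)
    (ρ : Mat n) (hρ : ρ.PosSemidef) (c : ℝ) (hc : 0 < c) :
    (∃ σ ∈ N, σ.PosDef ∧ traceR σ = 1 ∧ ∃ y : Mat n, y.PosSemidef ∧ traceR (mpow y p) ≤ 1 ∧
      (c • sw r σ y - ρ).PosDef) ∨
    (∃ x : Mat n, x.PosSemidef ∧ traceR (x * ρ) = c ∧ ∀ σ ∈ N, σ.PosDef → traceR σ = 1 →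
      traceR (mpow (sw r σ x) r) ≤ 1) := by
  have hr := hrp.pos
  have hp := hrp.symm.pos
  have hi := hrp.inv_add_inv_eq_one
  rcases alternative N r {y : Mat n | y.PosSemidef ∧ traceR (mpow y p) ≤ 1} (fun y hy => hy.1)
    (by
      have T0 : 0 ≤ traceR (mpow (1 : Mat n) p) := traceR_mpow_nonneg PosSemidef.one _
      set T := traceR (mpow (1 : Mat n) p) with hT
      have c0 : 0 < (1 + T) ^ (-(1/p)) := by positivity
      refine ⟨(1 + T) ^ (-(1/p)) • 1, ⟨psd_smul PosSemidef.one c0.le, ?_⟩, pd_smul PosDef.one c0⟩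
      rw [mpow_smul PosSemidef.one c0.le, traceR_smul, ← Real.rpow_mul (by positivity), ← hT,
        neg_mul, one_div_mul_cancel hp.ne', Real.rpow_neg_one, inv_mul_le_iff₀ (by positivity)]
      linarith)
    (by
      rintro σ₁ σ₂ y₁ y₂ p₁ p₂ ⟨hy₁, ty₁⟩ ⟨hy₂, ty₂⟩ t₁ t₂ h₁ h₂ h12
      have k := key (pd_smul p₁ h₁) (pd_smul p₂ h₂)
        (psd_smul hy₁ (show 0 ≤ t₁ ^ (1/p) by positivity))
        (psd_smul hy₂ (show 0 ≤ t₂ ^ (1/p) by positivity)) hrp _ rfl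
      refine ⟨_, ⟨k.1, k.2.trans ?_⟩, ?_⟩
      · rw [mpow_smul hy₁ (by positivity), mpow_smul hy₂ (by positivity), traceR_smul, traceR_smul,
          ← Real.rpow_mul h₁.le, ← Real.rpow_mul h₂.le, one_div_mul_cancel hp.ne', Real.rpow_one,
          Real.rpow_one]
        nlinarith
      · rw [← sw_smul hrp p₁.posSemidef _ h₁, ← sw_smul hrp p₂.posSemidef _ h₂]
        have hσ := (pd_smul p₁ h₁).add (pd_smul p₂ h₂)
        generalize t₁ • σ₁ + t₂ • σ₂ = σ at hσ
        generalize t₁ • σ₁ = τ₁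
        generalize t₂ • σ₂ = τ₂
        have i1 : mpow σ (1/(2*r)) * mpow σ (-(1/(2*r))) = 1 := by
          rw [mpow_add_pd hσ, add_neg_cancel, mpow_zero hσ.1]
        have i2 : mpow σ (-(1/(2*r))) * mpow σ (1/(2*r)) = 1 := by
          rw [mpow_add_pd hσ, neg_add_cancel, mpow_zero hσ.1]
        unfold sw
        have g : ∀ S S' T Y : Mat n, S * S' = 1 → S' * S = 1 →
            S * (S' * T * Y * (T * S')) * S = T * Y * T := by
          intro S S' T Y h h'
          calc S * (S' * T * Y * (T * S')) * S = (S * S') * (T * Y * T) * (S' * S) := by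
                simp only [mul_assoc]
            _ = _ := by rw [h, h', one_mul, mul_one]
        rw [mul_add, add_mul, g _ _ _ _ i1 i2, g _ _ _ _ i1 i2])
    (by
      intro z hz h
      set T := traceR (mpow z r) with hT
      have T0 : 0 ≤ T := traceR_mpow_nonneg hz r
      rcases T0.eq_or_lt with h0 | h0
      · rw [← h0]; exact zero_le_one
      have hrp1 : (r - 1) * p = r := by field_simp at hi; linarith
      have c0 : 0 < T ^ (-(1/p)) := by positivity
      have h1 := h (T ^ (-(1/p)) • mpow z (r - 1)) ⟨psd_smul (mpow_psd hz _) c0.le, by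
        rw [mpow_smul (mpow_psd hz _) c0.le, traceR_smul, mpow_mpow hz, hrp1, ← hT,
          ← Real.rpow_mul T0, neg_mul, one_div_mul_cancel hp.ne', Real.rpow_neg_one,
          inv_mul_cancel₀ h0.ne']⟩
      rw [mul_smul_comm, traceR_smul] at h1
      nth_rw 1 [← mpow_one hz.1] at h1
      rw [mpow_add hz (by linarith), add_sub_cancel, ← hT] at h1
      have e : T ^ (-(1/p)) * T = T ^ (1/r) := by
        nth_rw 2 [← Real.rpow_one T]
        rw [← Real.rpow_add h0]
        congr 1
        simp only [one_div]; linarith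
      rw [e] at h1
      by_contra! hgt
      have := Real.one_lt_rpow hgt (show 0 < 1/r by positivity)
      linarith)
    ρ hρ c hc with h | h
  · left
    obtain ⟨σ, hσ, p1, tr, y, hy, h⟩ := h
    exact ⟨σ, hσ, p1, tr, y, hy.1, hy.2, h⟩
  · right; exact h

theorem density_traceR {σ : Mat n} (h : IsDensity σ) : traceR σ = 1 := by
  rw [traceR, h.2]; simp

theorem isDensity_of {σ : Mat n} (h : σ.PosSemidef) (ht : traceR σ = 1) : IsDensity σ := by
  refine ⟨h, ?_⟩
  have := (Complex.nonneg_iff.1 h.trace_nonneg).2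
  exact Complex.ext (by rw [Complex.one_re]; exact ht) (by simpa using this.symm)

/-- the feasibility condition -/
def Feas (N : StarSubalgebra ℂ (Mat n)) (r : ℝ) (x : Mat n) : Prop :=
  ∀ a b : Mat n, a ∈ N → b ∈ N → snorm r (a * x * b) ≤ snorm (2 * r) a * snorm (2 * r) b

theorem feas_density {N : StarSubalgebra ℂ (Mat n)} {x : Mat n} (hx : x.PosSemidef) {r : ℝ}
    (hr : 1 ≤ r) (hf : Feas N r x) {σ : Mat n} (hσN : σ ∈ N) (hσ : IsDensity σ) :
    traceR (mpow (sw r σ x) r) ≤ 1 := by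
  have hr0 : 0 < r := by linarith
  have h := hf _ _ (mpow_mem hσN (1/(2*r))) (mpow_mem hσN (1/(2*r)))
  change snorm r (sw r σ x) ≤ _ at h
  have hz : (sw r σ x).PosSemidef := sw_psd hx
  have e1 : snorm r (sw r σ x) = (traceR (mpow (sw r σ x) r)) ^ (1/r) := by
    rw [snorm, show (sw r σ x)ᴴ = sw r σ x from hz.1]
    have : sw r σ x * sw r σ x = mpow (sw r σ x) 2 := by
      nth_rw 1 2 [← mpow_one hz.1]
      rw [mpow_add hz (by norm_num)]; norm_num
    rw [this, mpow_mpow hz, mul_div_cancel₀ _ two_ne_zero]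
  have e2 : snorm (2*r) (mpow σ (1/(2*r))) = 1 := by
    rw [snorm, mpow_herm, mpow_add hσ.1 (by positivity), mpow_mpow hσ.1,
      show (1/(2*r) + 1/(2*r)) * (2*r/2) = 1 by field_simp; norm_num, mpow_one hσ.1.1,
      density_traceR hσ, Real.one_rpow]
  rw [e1, e2, one_mul] at h
  by_contra! hgt
  have := Real.one_lt_rpow hgt (show 0 < 1/r by positivity)
  linarith

theorem supp_right {ρ σ : Mat n} (hσ : σ.PosSemidef) (h : suppLe ρ σ) {a : ℝ} (ha : 1 + a ≠ 0) :
    ρ * (mpow σ a * mpow σ (-a)) = ρ := by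
  set Q := mpow σ a * mpow σ (-a) with hQ
  have h1 : σ * Q = σ := by
    rw [hQ, ← mul_assoc]
    nth_rw 1 [← mpow_one hσ.1]
    rw [mpow_add hσ ha, mpow_add hσ (by simp), add_neg_cancel_right, mpow_one hσ.1]
  have h2 : ρ * (Q - 1) = 0 := by
    ext i j
    have h3 : σ *ᵥ (fun k => (Q - 1) k j) = 0 := by
      have h4 : σ * (Q - 1) = 0 := by rw [mul_sub, h1, mul_one, sub_self]
      funext i
      exact congrFun (congrFun h4 i) j
    exact congrFun (h _ h3) i
  rw [mul_sub, mul_one, sub_eq_zero] at h2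
  exact h2

theorem supp_left {ρ σ : Mat n} (hρ : ρ.IsHermitian) (hσ : σ.PosSemidef) (h : suppLe ρ σ) {a : ℝ}
    (ha : 1 + a ≠ 0) : (mpow σ (-a) * mpow σ a) * ρ = ρ := by
  have := congrArg conjTranspose (supp_right hσ h ha)
  rwa [conjTranspose_mul, conjTranspose_mul, mpow_herm, mpow_herm, show ρᴴ = ρ from hρ] at this

theorem exp_eq {r p : ℝ} (hrp : r.HolderConjugate p) : (1 - p)/(2*p) = -(1/(2*r)) := by
  have hr := hrp.pos
  have hp := hrp.symm.pos
  have hi := hrp.inv_add_inv_eq_one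
  field_simp at hi ⊢
  linarith

theorem sandwich_psd {p : ℝ} {ρ σ : Mat n} (hρ : ρ.PosSemidef) : (sandwich p ρ σ).PosSemidef := by
  have := hρ.mul_mul_conjTranspose_same (mpow σ ((1 - p)/(2*p)))
  rwa [mpow_herm] at this

theorem sw_sandwich {r p : ℝ} (hrp : r.HolderConjugate p) {ρ σ : Mat n} (hρ : ρ.PosSemidef)
    (hσ : σ.PosSemidef) (h : suppLe ρ σ) : sw r σ (sandwich p ρ σ) = ρ := by
  have hr := hrp.pos
  have hr1 := hrp.lt
  have l := supp_left hρ.1 hσ h (a := -(1/(2*r)))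
    (by have : 1/(2*r) < 1 := by (rw [div_lt_one (by positivity)]; linarith)
        linarith)
  have rr := supp_right hσ h (a := -(1/(2*r)))
    (by have : 1/(2*r) < 1 := by (rw [div_lt_one (by positivity)]; linarith)
        linarith)
  rw [neg_neg] at l rr
  rw [sandwich, exp_eq hrp, sw]
  calc _ = (mpow σ (1/(2*r)) * mpow σ (-(1/(2*r))) * ρ) * (mpow σ (-(1/(2*r))) * mpow σ (1/(2*r))) := by
        simp only [mul_assoc]
    _ = _ := by rw [l, rr]

theorem lower_lt {N : StarSubalgebra ℂ (Mat n)} {r p : ℝ} (hrp : r.HolderConjugate p)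
    {x : Mat n} (hx : x.PosSemidef) (hf : Feas N r x) {σ ρ : Mat n} (hσN : σ ∈ N)
    (hσ : IsDensity σ) (hρ : ρ.PosSemidef) (h : suppLe ρ σ) :
    traceR (x * ρ) ≤ (traceR (mpow (sandwich p ρ σ) p)) ^ (1/p) := by
  have hr := hrp.pos
  nth_rw 1 [← sw_sandwich hrp hρ hσ.1 h]
  rw [← traceR_sw]
  refine (holder_psd (sw_psd hx) (sandwich_psd hρ) hrp).trans ?_
  have h1 := feas_density hx hrp.lt.le hf hσN hσ
  have h2 : traceR (mpow (sw r σ x) r) ^ (1/r) ≤ 1 :=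
    Real.rpow_le_one (traceR_mpow_nonneg (sw_psd hx) _) h1 (by positivity)
  have h3 : 0 ≤ (traceR (mpow (sandwich p ρ σ) p)) ^ (1/p) :=
    Real.rpow_nonneg (traceR_mpow_nonneg (sandwich_psd hρ) _) _
  nlinarith

theorem lower_inf {N : StarSubalgebra ℂ (Mat n)} {x : Mat n} (hx : x.PosSemidef)
    (hf : Feas N 1 x) {σ ρ : Mat n} (hσN : σ ∈ N) (hσ : IsDensity σ) {c : ℝ} (hc : 0 ≤ c)
    (h : (c • σ - ρ).PosSemidef) : traceR (x * ρ) ≤ c := by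
  have h1 := feas_density hx le_rfl hf hσN hσ
  rw [mpow_one (sw_psd hx).1, ← mul_one (sw 1 σ x), traceR_sw] at h1
  have e : sw 1 σ 1 = σ := by rw [sw, mul_one, mul_one, mpow_half_sq hσ.1]
  rw [e] at h1
  have h2 := traceR_mul_le h hx
  rw [smul_mul_assoc, traceR_smul, traceR_comm ρ, traceR_comm σ] at h2
  nlinarith

theorem suppLe_pd {ρ σ : Mat n} (hσ : σ.PosDef) : suppLe ρ σ := by
  intro v hv
  have : v = 0 := by
    have hi := mulVec_injective_of_isUnit hσ.isUnit
    exact hi (by rw [hv, mulVec_zero])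
  rw [this, mulVec_zero]

theorem upper_lt {r p : ℝ} (hrp : r.HolderConjugate p) {ρ σ y : Mat n} (hρ : ρ.PosSemidef)
    (hσ : σ.PosDef) (hy : y.PosSemidef) (hyp : traceR (mpow y p) ≤ 1) {c : ℝ} (hc : 0 ≤ c)
    (h : (c • sw r σ y - ρ).PosSemidef) :
    (traceR (mpow (sandwich p ρ σ) p)) ^ (1/p) ≤ c := by
  have hp := hrp.symm.pos
  have h1 := h.mul_mul_conjTranspose_same (mpow σ (-(1/(2*r))))
  rw [mpow_herm, mul_sub, sub_mul] at h1
  have i1 : mpow σ (1/(2*r)) * mpow σ (-(1/(2*r))) = 1 := by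
    rw [mpow_add_pd hσ, add_neg_cancel, mpow_zero hσ.1]
  have i2 : mpow σ (-(1/(2*r))) * mpow σ (1/(2*r)) = 1 := by
    rw [mpow_add_pd hσ, neg_add_cancel, mpow_zero hσ.1]
  have e : mpow σ (-(1/(2*r))) * (c • sw r σ y) * mpow σ (-(1/(2*r))) = c • y := by
    rw [mul_smul_comm, smul_mul_assoc, sw]
    congr 1
    calc _ = (mpow σ (-(1/(2*r))) * mpow σ (1/(2*r))) * y * (mpow σ (1/(2*r)) * mpow σ (-(1/(2*r)))) := by
          simp only [mul_assoc]
      _ = _ := by rw [i1, i2, one_mul, mul_one]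
  rw [e] at h1
  have h2 : (c • y - sandwich p ρ σ).PosSemidef := by rwa [sandwich, exp_eq hrp]
  have h3 := trace_mpow_mono (sandwich_psd hρ) h2 hrp.symm.lt.le
  rw [mpow_smul hy hc, traceR_smul] at h3
  have cp0 : 0 ≤ c ^ p := Real.rpow_nonneg hc _
  have h4 : traceR (mpow (sandwich p ρ σ) p) ≤ c ^ p := by nlinarith
  calc _ ≤ (c ^ p) ^ (1/p) := Real.rpow_le_rpow (traceR_mpow_nonneg (sandwich_psd hρ) _) h4 (by positivity)
    _ = c := by rw [← Real.rpow_mul hc, mul_one_div_cancel hp.ne', Real.rpow_one]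

theorem ereal_step {c s : ℝ} (hc : 0 < c) (hs : 0 ≤ s) (p : ℝ≥0∞) (ρ : Mat n) (S : Set (Mat n))
    (h1 : 0 < s → ∀ σ ∈ S, IsDensity σ → ((Real.log s / c : ℝ) : EReal) ≤ Dp p ρ σ)
    (h2 : ∀ t : ℝ, s < t → ∃ σ ∈ S, IsDensity σ ∧ ∃ d : ℝ, Dp p ρ σ = (d : EReal) ∧
      Real.exp (c * d) ≤ t) :
    EReal.exp ((c : EReal) * DpSet p ρ S) = ENNReal.ofReal s := by
  have hmono : ∀ a b : EReal, a ≤ b → (c : EReal) * a ≤ c * b := fun a b hab =>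
    mul_le_mul_of_nonneg_left hab (by exact_mod_cast hc.le)
  apply le_antisymm
  · refine le_of_forall_gt_imp_ge_of_dense fun t ht => ?_
    rcases eq_or_ne t ⊤ with rfl | htop
    · exact le_top
    have hlt : s < t.toReal := by
      rwa [ENNReal.ofReal_lt_iff_lt_toReal hs htop] at ht
    obtain ⟨σ, hσ, hd, d, e, hle⟩ := h2 _ hlt
    have : DpSet p ρ S ≤ Dp p ρ σ := iInf₂_le σ ⟨hσ, hd⟩
    calc _ ≤ EReal.exp ((c : EReal) * (d : EReal)) := EReal.exp_monotone (hmono _ _ (e ▸ this))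
      _ = ENNReal.ofReal (Real.exp (c * d)) := by rw [← EReal.coe_mul, EReal.exp_coe]
      _ ≤ ENNReal.ofReal t.toReal := ENNReal.ofReal_le_ofReal hle
      _ = t := ENNReal.ofReal_toReal htop
  · rcases hs.eq_or_lt with h0 | h0
    · rw [← h0]; simp
    have : ((Real.log s / c : ℝ) : EReal) ≤ DpSet p ρ S := le_iInf₂ fun σ hσ => h1 h0 σ hσ.1 hσ.2
    have h3 := EReal.exp_monotone (hmono _ _ this)
    rw [← EReal.coe_mul, EReal.exp_coe, mul_div_cancel₀ _ hc.ne', Real.exp_log h0] at h3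
    exact h3

theorem main_lt [Nonempty n] (N : StarSubalgebra ℂ (Mat n)) {p : ℝ≥0∞} (hp : 1 < p) (hpt : p ≠ ⊤)
    {r : ℝ} (hrp : r.HolderConjugate p.toReal) (ρ : Mat n) (hρ : IsDensity ρ) :
    EReal.exp (((r⁻¹ : ℝ) : EReal) * DpSet p ρ (N : Set (Mat n))) =
      ENNReal.ofReal (sSup {t : ℝ | ∃ x : Mat n, x.PosSemidef ∧ Feas N r x ∧ t = traceR (x * ρ)}) := by
  set P := p.toReal with hP
  have hr := hrp.pos
  have hP0 := hrp.symm.pos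
  have hP1 := hrp.symm.lt
  have hi := hrp.inv_add_inv_eq_one
  set S := {t : ℝ | ∃ x : Mat n, x.PosSemidef ∧ Feas N r x ∧ t = traceR (x * ρ)} with hS
  have S0 : (0:ℝ) ∈ S := by
    refine ⟨0, PosSemidef.zero, fun a b ha hb => ?_, by simp [traceR]⟩
    have e : snorm r (a * 0 * b) = 0 := by
      rw [mul_zero, zero_mul, snorm, conjTranspose_zero, mul_zero, traceR_mpow PosSemidef.zero.1]
      have : ∀ i, (PosSemidef.zero (n := n) (R := ℂ)).1.eigenvalues i = 0 := by
        intro i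
        have := (IsHermitian.eigenvalues_eq_zero_iff (PosSemidef.zero (n := n) (R := ℂ)).1).2 rfl
        exact congrFun this i
      simp only [this]
      rw [Real.zero_rpow (by positivity)]
      simp [hr.ne']
    rw [e]
    exact mul_nonneg (Real.rpow_nonneg (traceR_mpow_nonneg (posSemidef_conjTranspose_mul_self _) _) _)
      (Real.rpow_nonneg (traceR_mpow_nonneg (posSemidef_conjTranspose_mul_self _) _) _)
  have Sne : S.Nonempty := ⟨0, S0⟩
  have low : ∀ σ ∈ N, IsDensity σ → suppLe ρ σ → ∀ t ∈ S,
      t ≤ (traceR (mpow (sandwich P ρ σ) P)) ^ (1/P) := by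
    rintro σ hσN hσ hsu _ ⟨x, hx, hf, rfl⟩
    exact lower_lt hrp hx hf hσN hσ hρ.1 hsu
  obtain ⟨σ₀, hσ₀, sp₀, str₀⟩ : ∃ σ ∈ N, σ.PosDef ∧ traceR σ = 1 := by
    have t0 : 0 < traceR (1 : Mat n) := pd_traceR_pos PosDef.one
    refine ⟨(traceR (1 : Mat n))⁻¹ • 1, smul_real_mem N.one_mem _,
      pd_smul PosDef.one (by positivity), ?_⟩
    rw [traceR_smul, inv_mul_cancel₀ t0.ne']
  have Sbdd : BddAbove S := ⟨_, low σ₀ hσ₀ (isDensity_of sp₀.posSemidef str₀) (suppLe_pd sp₀)⟩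
  have s0 : 0 ≤ sSup S := le_csSup Sbdd S0
  have hp1 : p ≠ 1 := hp.ne'
  refine ereal_step (by positivity) s0 p ρ _ ?_ ?_
  · intro hs σ hσN hσ
    unfold Dp
    rw [if_neg hpt, if_neg hp1, ← hP]
    split_ifs with h1 h2
    · exact le_top
    · exact le_top
    · have hsu : suppLe ρ σ := by
        by_contra hh; exact h1 ⟨hP1, hh⟩
      have h3 : sSup S ≤ _ := csSup_le Sne (low σ hσN hσ hsu)
      have T0 : 0 < traceR (mpow (sandwich P ρ σ) P) :=
        lt_of_le_of_ne (traceR_mpow_nonneg (sandwich_psd hρ.1) _) (Ne.symm h2)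
      have h4 := Real.log_le_log hs h3
      rw [Real.log_rpow T0] at h4
      rw [EReal.coe_le_coe_iff, div_le_iff₀ (by positivity)]
      refine h4.trans_eq ?_
      have : r⁻¹ = (P - 1) / P := by field_simp at hi ⊢; linarith
      rw [this]
      have : P - 1 ≠ 0 := by linarith
      field_simp
  · intro t ht
    have t0 : 0 < t := lt_of_le_of_lt s0 ht
    rcases alternative_lt N hrp ρ hρ.1 t t0 with h | h
    · obtain ⟨σ, hσN, hσ, tr, y, hy, hyp, hd⟩ := h
      have up := upper_lt hrp hρ.1 hσ hy hyp t0.le hd.posSemidef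
      have T0 : 0 < traceR (mpow (sandwich P ρ σ) P) := by
        refine traceR_mpow_pos (sandwich_psd hρ.1) ?_ _
        intro h0
        have := sw_sandwich hrp hρ.1 hσ.posSemidef (suppLe_pd hσ)
        rw [h0, sw, mul_zero, zero_mul] at this
        have h1 := density_traceR hρ
        rw [← this] at h1
        simp [traceR] at h1
      refine ⟨σ, hσN, isDensity_of hσ.posSemidef tr, (P - 1)⁻¹ * Real.log (traceR (mpow (sandwich P ρ σ) P)), ?_, ?_⟩
      · unfold Dp
        rw [if_neg hpt, if_neg hp1, ← hP, if_neg (fun hh => hh.2 (suppLe_pd hσ)), if_neg T0.ne']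
      · refine le_trans (le_of_eq ?_) up
        rw [Real.rpow_def_of_pos T0]
        congr 1
        have : r⁻¹ = (P - 1) / P := by field_simp at hi ⊢; linarith
        rw [this]
        have : P - 1 ≠ 0 := by linarith
        field_simp
    · obtain ⟨x, hx, hxt, hb⟩ := h
      have hf : Feas N r x := feas hx hrp.lt.le hb
      have : t ≤ sSup S := le_csSup Sbdd ⟨x, hx, hf, hxt.symm⟩
      linarith

section Bound
open scoped Matrix.Norms.L2Operator

theorem exists_bound {ρ : Mat n} (h : ρ.IsHermitian) : ∃ δ : ℝ, 0 < δ ∧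
    (δ • (1 : Mat n) - ρ).PosSemidef :=
  ⟨‖ρ‖ + 1, by positivity, (small_pd h (by positivity) (by linarith)).posSemidef⟩

end Bound

theorem main_top [Nonempty n] (N : StarSubalgebra ℂ (Mat n)) (ρ : Mat n) (hρ : IsDensity ρ) :
    EReal.exp (((1⁻¹ : ℝ) : EReal) * DpSet ⊤ ρ (N : Set (Mat n))) =
      ENNReal.ofReal (sSup {t : ℝ | ∃ x : Mat n, x.PosSemidef ∧ Feas N 1 x ∧ t = traceR (x * ρ)}) := by
  set S := {t : ℝ | ∃ x : Mat n, x.PosSemidef ∧ Feas N 1 x ∧ t = traceR (x * ρ)} with hS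
  have S0 : (0:ℝ) ∈ S := by
    refine ⟨0, PosSemidef.zero, fun a b ha hb => ?_, by simp [traceR]⟩
    have e : snorm 1 (a * 0 * b) = 0 := by
      rw [mul_zero, zero_mul, snorm, conjTranspose_zero, mul_zero, traceR_mpow PosSemidef.zero.1]
      have : ∀ i, (PosSemidef.zero (n := n) (R := ℂ)).1.eigenvalues i = 0 := by
        intro i
        have := (IsHermitian.eigenvalues_eq_zero_iff (PosSemidef.zero (n := n) (R := ℂ)).1).2 rfl
        exact congrFun this i
      simp only [this]
      rw [Real.zero_rpow (by positivity)]
      simp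
    rw [e]
    exact mul_nonneg (Real.rpow_nonneg (traceR_mpow_nonneg (posSemidef_conjTranspose_mul_self _) _) _)
      (Real.rpow_nonneg (traceR_mpow_nonneg (posSemidef_conjTranspose_mul_self _) _) _)
  have Sne : S.Nonempty := ⟨0, S0⟩
  have low : ∀ σ ∈ N, IsDensity σ → ∀ c : ℝ, 0 ≤ c → (c • σ - ρ).PosSemidef → ∀ t ∈ S, t ≤ c := by
    rintro σ hσN hσ c hc hps _ ⟨x, hx, hf, rfl⟩
    exact lower_inf hx hf hσN hσ hc hps
  have Sbdd : BddAbove S := by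
    obtain ⟨δ, δ0, hδ⟩ := exists_bound hρ.1.1
    have t0 : 0 < traceR (1 : Mat n) := pd_traceR_pos PosDef.one
    refine ⟨δ * traceR (1 : Mat n), low ((traceR (1 : Mat n))⁻¹ • 1) (smul_real_mem N.one_mem _)
      (isDensity_of (psd_smul PosSemidef.one (by positivity)) ?_) _ (by positivity) ?_⟩
    · rw [traceR_smul, inv_mul_cancel₀ t0.ne']
    · rw [smul_smul, mul_assoc, mul_inv_cancel₀ t0.ne', mul_one]; exact hδ
  have s0 : 0 ≤ sSup S := le_csSup Sbdd S0
  refine ereal_step (by norm_num) s0 ⊤ ρ _ ?_ ?_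
  · intro hs σ hσN hσ
    unfold Dp Dinf
    rw [if_pos rfl]
    split_ifs with h1
    · rw [EReal.coe_le_coe_iff]
      norm_num
      refine Real.log_le_log hs (le_csInf h1 ?_)
      rintro c ⟨hc, hps⟩
      exact csSup_le Sne (low σ hσN hσ c hc hps)
    · exact le_top
  · intro t ht
    have t0 : 0 < t := lt_of_le_of_lt s0 ht
    rcases alternative_one N ρ hρ.1 t t0 with h | h
    · obtain ⟨σ, hσN, hσ, tr, hd⟩ := h
      have ex : ∃ c : ℝ, 0 ≤ c ∧ (c • σ - ρ).PosSemidef := ⟨t, t0.le, hd.posSemidef⟩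
      refine ⟨σ, hσN, isDensity_of hσ.posSemidef tr,
        Real.log (sInf {c : ℝ | 0 ≤ c ∧ (c • σ - ρ).PosSemidef}), ?_, ?_⟩
      · unfold Dp Dinf
        rw [if_pos rfl, if_pos ex]
      · have h1 : 1 ≤ sInf {c : ℝ | 0 ≤ c ∧ (c • σ - ρ).PosSemidef} := by
          refine le_csInf ex ?_
          rintro c ⟨hc, hps⟩
          have := psd_traceR_nonneg hps
          rw [traceR_sub, traceR_smul, tr, density_traceR hρ] at this
          linarith
        rw [inv_one, one_mul, Real.exp_log (by linarith)]
        exact csInf_le ⟨0, fun c hc => hc.1⟩ ⟨t0.le, hd.posSemidef⟩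
    · obtain ⟨x, hx, hxt, hb⟩ := h
      have hf : Feas N 1 x := feas hx le_rfl hb
      have : t ≤ sSup S := le_csSup Sbdd ⟨x, hx, hf, hxt.symm⟩
      linarith

/-- for `1 < p ≤ ∞` with `1/p + 1/p' = 1` (`p' = 1` for `p = ∞`)
and a density `ρ`,
`exp(D_p(ρ‖N)/p') = sup { Tr(xρ) : x ≥ 0, ‖a x b‖_{p'} ≤ ‖a‖_{2p'} ‖b‖_{2p'}
for all a, b ∈ N }`. -/
theorem statement17 {m : ℕ} (N : StarSubalgebra ℂ (Mat (Fin m)))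
    (p : ℝ≥0∞) (hp : 1 < p) (ρ : Mat (Fin m)) (hρ : IsDensity ρ) :
    letI p' : ℝ := if p = ⊤ then 1 else p.toReal / (p.toReal - 1)
    EReal.exp (((p'⁻¹ : ℝ) : EReal) * DpSet p ρ (N : Set (Mat (Fin m)))) =
      ENNReal.ofReal (sSup {r : ℝ | ∃ x : Mat (Fin m), x.PosSemidef ∧
        (∀ a b : Mat (Fin m), a ∈ N → b ∈ N →
          snorm p' (a * x * b) ≤ snorm (2 * p') a * snorm (2 * p') b) ∧
        r = traceR (x * ρ)}) := by
  have hne : Nonempty (Fin m) := by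
    by_contra h
    rw [not_nonempty_iff] at h
    have := hρ.2
    simp [trace] at this
  by_cases hpt : p = ⊤
  · subst hpt
    simp only [if_true]
    exact main_top N ρ hρ
  · simp only [if_neg hpt]
    have h1 : 1 < p.toReal := by
      have := (ENNReal.toReal_lt_toReal ENNReal.one_ne_top hpt).2 hp
      simpa using this
    exact main_lt N hp hpt (Real.HolderConjugate.conjExponent h1).symm ρ hρ

end GJL
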